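/- arXiv:1111.3787 — 5 statements merged into one kernel-verified Lean document; each statement's English description precedes it below -/
import Mathlib

section
/- With K = ℚ(ζ + ζ^{-1}) for ζ a primitive 2^r-th root of unity (r ≥ 5), n = 2^{r-2}, e_0 = 1, e_i = ζ^i + ζ^{-i}, and α = 4 + e_1 - 2e_2 - e_3, one has: Tr_{K/ℚ}(α e_i e_i) = 2^r if i = 0 or i = 1; Tr_{K/ℚ}(α e_i e_i) = 2^{r+1} if 2 ≤ i < n - 1; and Tr_{K/ℚ}(α e_i e_i) = 3·2^r if i = n - 1. -/
open scoped IntermediateField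

/-!
Put `e_k = ζ ^ k + ζ ^ (-k)` for every integer `k`, so that `e_0 = 2` here and
`e_j * e_k ^ 2 = e_(2k+j) + e_(2k-j) + 2 * e_j`. Expanding `α * e_k ^ 2` in this way reduces the
trace to those of constants and of single `e_j`. If `2 ^ (r - 1)` does not divide `j`, some
conjugation of `ζ` sends `ζ ^ j` to `-ζ ^ j`, so `e_j` is conjugate to `-e_j` and has trace zero.
The only other `e_j` that occur are `e_0 = 2`, as `e_(2k-2)` for `k = 1`, and `e_(2n) = -2`, as
`e_(2k+2)` for `k = n - 1`. Constants have trace `n` times themselves: the conjugation `ζ ↦ ζ⁻¹`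
fixes `ζ + ζ⁻¹` but moves `ζ`, so `ζ` is quadratic over `K`, which therefore has degree `n`.
-/

open IntermediateField Polynomial

section Conjugates

variable {F L : Type*} [Field F] [Field L] [Algebra F L]

theorem trace_eq_of_isConjRoot [FiniteDimensional F L] {x y : L} (h : IsConjRoot F x y) :
    Algebra.trace F L x = Algebra.trace F L y := by
  have hdeg : Module.finrank F F⟮x⟯ = Module.finrank F F⟮y⟯ := by
    rw [adjoin.finrank (.of_finite F x), adjoin.finrank (.of_finite F y), h]
  have hcodeg : Module.finrank F⟮x⟯ L = Module.finrank F⟮y⟯ L := by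
    apply Nat.eq_of_mul_eq_mul_left (Module.finrank_pos (R := F) (M := F⟮x⟯))
    rw [Module.finrank_mul_finrank, hdeg, Module.finrank_mul_finrank]
  rw [trace_eq_finrank_mul_minpoly_nextCoeff, trace_eq_finrank_mul_minpoly_nextCoeff, hcodeg, h]

theorem trace_eq_zero_of_isConjRoot_neg [NeZero (2 : F)] [FiniteDimensional F L] {x : L}
    (h : IsConjRoot F x (-x)) : Algebra.trace F L x = 0 := by
  have hneg : Algebra.trace F L x = -Algebra.trace F L x := by
    rw [← map_neg, ← trace_eq_of_isConjRoot h]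
  have htwo : 2 * Algebra.trace F L x = 0 := by linear_combination hneg
  exact (mul_eq_zero.1 htwo).resolve_left two_ne_zero

theorem exists_algHom_adjoin_of_isConjRoot {x y : L} (hx : IsIntegral F x)
    (h : IsConjRoot F x y) : ∃ φ : F⟮x⟯ →ₐ[F] L, φ (AdjoinSimple.gen F x) = y :=
  ⟨_, algHomAdjoinIntegralEquiv_symm_apply_gen F hx
    ⟨y, (isConjRoot_iff_mem_minpoly_aroots hx).1 h⟩⟩

theorem isConjRoot_algHom_adjoin {x : L} (φ : F⟮x⟯ →ₐ[F] L) (z : F⟮x⟯) :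
    IsConjRoot F (z : L) (φ z) :=
  (minpoly.algHom_eq F⟮x⟯.val F⟮x⟯.val.injective z).trans
    (minpoly.algHom_eq φ φ.injective z).symm

theorem isIntegral_zpow {x : L} (hx : IsIntegral F x) (k : ℤ) : IsIntegral F (x ^ k) := by
  obtain ⟨m, rfl | rfl⟩ := k.eq_nat_or_neg
  · simpa only [zpow_natCast] using hx.pow m
  · simpa only [zpow_neg, zpow_natCast] using (hx.pow m).inv

theorem isConjRoot_zpow {x y : L} (hx : IsIntegral F x) (h : IsConjRoot F x y) (k : ℤ) :
    IsConjRoot F (x ^ k) (y ^ k) := by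
  obtain ⟨φ, rfl⟩ := exists_algHom_adjoin_of_isConjRoot hx h
  rw [← map_zpow₀]
  exact isConjRoot_algHom_adjoin φ (AdjoinSimple.gen F x ^ k)

theorem isConjRoot_add_inv {x y : L} (hx : IsIntegral F x) (h : IsConjRoot F x y) :
    IsConjRoot F (x + x⁻¹) (y + y⁻¹) := by
  obtain ⟨φ, rfl⟩ := exists_algHom_adjoin_of_isConjRoot hx h
  simpa using isConjRoot_algHom_adjoin φ (AdjoinSimple.gen F x + (AdjoinSimple.gen F x)⁻¹)

end Conjugates

section AdjoinAddInv

variable {F L : Type*} [Field F] [Field L] [Algebra F L] {x : L}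

variable (F x) in
theorem adjoin_add_inv_le : F⟮x + x⁻¹⟯ ≤ F⟮x⟯ :=
  adjoin_simple_le_iff.2 <|
    add_mem (mem_adjoin_simple_self F x) (inv_mem (mem_adjoin_simple_self F x))

-- The embedding of `F⟮x⟯` sending `x` to `x⁻¹` fixes `x + x⁻¹` but moves `x`.
theorem notMem_adjoin_add_inv (hx : IsIntegral F x) (h : IsConjRoot F x x⁻¹) (hne : x ≠ x⁻¹) :
    x ∉ F⟮x + x⁻¹⟯ := by
  intro hmem
  obtain ⟨φ, hφ⟩ := exists_algHom_adjoin_of_isConjRoot hx h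
  have hfix : φ.comp (inclusion (adjoin_add_inv_le F x)) = F⟮x + x⁻¹⟯.val := by
    refine algHom_ext_of_eq_adjoin F rfl fun _ hz ↦ ?_
    obtain rfl := Set.mem_singleton_iff.1 hz
    change φ (AdjoinSimple.gen F x + (AdjoinSimple.gen F x)⁻¹) = x + x⁻¹
    rw [map_add, map_inv₀, hφ, inv_inv, add_comm]
  have hφx : φ (AdjoinSimple.gen F x) = x := DFunLike.congr_fun hfix ⟨x, hmem⟩
  exact hne (hφx.symm.trans hφ)

theorem natDegree_minpoly_adjoin_add_inv (hx : IsIntegral F x) (h : IsConjRoot F x x⁻¹)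
    (hne : x ≠ x⁻¹) : (minpoly F⟮x + x⁻¹⟯ x).natDegree = 2 := by
  have hx0 : x ≠ 0 := by
    rintro rfl
    simp at hne
  let p : F⟮x + x⁻¹⟯[X] := X ^ 2 - C (AdjoinSimple.gen F (x + x⁻¹)) * X + 1
  have hmonic : p.Monic := by
    simp only [p]
    monicity!
  have hdeg : p.natDegree = 2 := by
    simp only [p]
    compute_degree!
  have hroot : aeval x p = 0 := by
    simp only [p, map_add, map_sub, map_mul, map_pow, aeval_X, aeval_C, map_one,
      AdjoinSimple.algebraMap_gen]
    field_simp
    ring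
  apply le_antisymm
  · rw [← hdeg]
    exact natDegree_le_natDegree (minpoly.min _ x hmonic hroot)
  · rw [minpoly.two_le_natDegree_iff hx.tower_top]
    rintro ⟨y, hy⟩
    exact notMem_adjoin_add_inv hx h hne (Set.mem_of_eq_of_mem hy.symm y.2)

theorem finrank_adjoin_add_inv_mul_two (hx : IsIntegral F x) (h : IsConjRoot F x x⁻¹)
    (hne : x ≠ x⁻¹) : Module.finrank F F⟮x + x⁻¹⟯ * 2 = Module.finrank F F⟮x⟯ := by
  rw [← finrank_bot_mul_relfinrank (adjoin_add_inv_le F x),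
    relfinrank_eq_finrank_of_le (adjoin_add_inv_le F x), extendScalars_adjoin,
    adjoin.finrank hx.tower_top, natDegree_minpoly_adjoin_add_inv hx h hne]

end AdjoinAddInv

section RootsOfUnity

variable {F L : Type*} [Field F] [Field L] [Algebra F L] {ζ : L} {N : ℕ}

variable (F) in
theorem neZero_natCast_of_isPrimitiveRoot [NeZero N] (hζ : IsPrimitiveRoot ζ N) :
    NeZero (N : F) :=
  have := hζ.neZero'
  .nat_of_neZero (algebraMap F L)

theorem minpoly_eq_cyclotomic [NeZero N] (hζ : IsPrimitiveRoot ζ N)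
    (hirr : Irreducible (cyclotomic N F)) : minpoly F ζ = cyclotomic N F := by
  have := neZero_natCast_of_isPrimitiveRoot F hζ
  exact (hζ.minpoly_eq_cyclotomic_of_irreducible hirr).symm

theorem isConjRoot_of_isPrimitiveRoot [NeZero N] {ξ : L} (hζ : IsPrimitiveRoot ζ N)
    (hξ : IsPrimitiveRoot ξ N) (hirr : Irreducible (cyclotomic N F)) : IsConjRoot F ζ ξ := by
  rw [isConjRoot_def, minpoly_eq_cyclotomic hζ hirr, minpoly_eq_cyclotomic hξ hirr]

theorem isIntegral_of_isPrimitiveRoot [NeZero N] (hζ : IsPrimitiveRoot ζ N) : IsIntegral F ζ :=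
  (hζ.isIntegral (NeZero.pos N)).tower_top

theorem finrank_adjoin_add_inv_mul_two_eq_totient (hN : 2 < N) (hζ : IsPrimitiveRoot ζ N)
    (hirr : Irreducible (cyclotomic N F)) :
    Module.finrank F F⟮ζ + ζ⁻¹⟯ * 2 = N.totient := by
  have : NeZero N := ⟨by omega⟩
  have hint : IsIntegral F ζ := isIntegral_of_isPrimitiveRoot hζ
  have hne : ζ ≠ ζ⁻¹ := by
    intro h
    have hsq : ζ ^ 2 = 1 := by
      rw [sq, ← mul_inv_cancel₀ (hζ.ne_zero (NeZero.ne N)), ← h]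
    exact hN.not_ge (Nat.le_of_dvd two_pos (hζ.dvd_of_pow_eq_one 2 hsq))
  rw [finrank_adjoin_add_inv_mul_two hint (isConjRoot_of_isPrimitiveRoot hζ hζ.inv hirr) hne,
    adjoin.finrank hint, minpoly_eq_cyclotomic hζ hirr, natDegree_cyclotomic]

theorem zpow_two_pow_mul_of_odd {r : ℕ} (hζ : IsPrimitiveRoot ζ (2 ^ (r + 1))) {m : ℤ}
    (hm : Odd m) : ζ ^ (2 ^ r * m) = -1 := by
  have hhalf : ζ ^ (2 ^ r : ℤ) = -1 :=
    mod_cast (hζ.pow (by positivity) (pow_succ 2 r)).eq_neg_one_of_two_right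
  rw [zpow_mul, hhalf, hm.neg_one_zpow]

/- Writing `k = 2 ^ s * m` with `m` odd and `s < r`, the conjugation `ζ ↦ ζ ^ (1 + 2 ^ (r - s))`
multiplies `ζ ^ k` by `ζ ^ (2 ^ r * m) = -1`. -/
theorem isConjRoot_zpow_neg_zpow {r : ℕ} (hζ : IsPrimitiveRoot ζ (2 ^ (r + 1)))
    (hirr : Irreducible (cyclotomic (2 ^ (r + 1)) F)) {k : ℤ} (hk : ¬ 2 ^ r ∣ k) :
    IsConjRoot F (ζ ^ k) (-ζ ^ k) := by
  have hk0 : k ≠ 0 := by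
    rintro rfl
    exact hk (dvd_zero _)
  obtain ⟨s, m, hm, rfl⟩ := WfDvdMonoid.max_power_factor hk0 Int.prime_two.irreducible
  have hsr : s < r := by
    by_contra! hrs
    exact hk ((pow_dvd_pow 2 hrs).mul_right m)
  have hcop : (1 + 2 ^ (r - s)).Coprime (2 ^ (r + 1)) := by
    refine (Nat.coprime_two_right.2 ?_).pow_right _
    exact odd_one.add_even (even_two.pow_of_ne_zero (by omega))
  have hconj : IsConjRoot F ζ (ζ ^ (1 + 2 ^ (r - s))) :=
    isConjRoot_of_isPrimitiveRoot hζ (hζ.pow_of_coprime _ hcop) hirr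
  have hexp : (ζ ^ (1 + 2 ^ (r - s))) ^ (2 ^ s * m) = -ζ ^ (2 ^ s * m) := by
    rw [← zpow_natCast, ← zpow_mul, neg_eq_neg_one_mul,
      ← zpow_two_pow_mul_of_odd hζ (Int.not_even_iff_odd.1 (even_iff_two_dvd.not.2 hm)),
      ← zpow_add₀ (hζ.ne_zero (NeZero.ne _)), ← pow_sub_mul_pow 2 hsr.le]
    congr 1
    push_cast
    ring
  exact hexp ▸ isConjRoot_zpow (isIntegral_of_isPrimitiveRoot hζ) hconj (2 ^ s * m)

end RootsOfUnity

theorem aeval_chebyshevC_add_inv {R L : Type*} [CommRing R] [Field L] [Algebra R L] {x : L}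
    (hx : x ≠ 0) (k : ℤ) : aeval (x + x⁻¹) (Chebyshev.C R k) = x ^ k + (x ^ k)⁻¹ := by
  induction k using Chebyshev.induct with
  | zero => rw [Chebyshev.C_zero, map_ofNat, zpow_zero, inv_one, one_add_one_eq_two]
  | one => simp
  | add_two k h₁ h₀ =>
    rw [Chebyshev.C_add_two, map_sub, map_mul, aeval_X, h₁, h₀]
    simp only [zpow_add₀ hx, zpow_ofNat]
    field_simp
    ring
  | neg_add_one k h₀ h₁ =>
    rw [Chebyshev.C_sub_one, map_sub, map_mul, aeval_X, h₁, h₀]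
    simp only [zpow_add₀ hx, zpow_sub₀ hx, zpow_one]
    field_simp
    ring

/-- The element `ζ ^ k + ζ ^ (-k)` of `F⟮ζ + ζ⁻¹⟯`, for any integer `k`, written as a Chebyshev
polynomial in `ζ + ζ⁻¹`. It is `e_k` for `k ≥ 1`, but its value at `k = 0` is `2`
whereas `e_0 = 1`. -/
noncomputable def zpowAddInv (F : Type*) {L : Type*} [Field F] [Field L] [Algebra F L] (ζ : L)
    (k : ℤ) : F⟮ζ + ζ⁻¹⟯ :=
  aeval (AdjoinSimple.gen F (ζ + ζ⁻¹)) (Chebyshev.C F k)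

section ZpowAddInv

variable {F L : Type*} [Field F] [Field L] [Algebra F L] {ζ : L}

theorem coe_zpowAddInv (hζ : ζ ≠ 0) (k : ℤ) : (zpowAddInv F ζ k : L) = ζ ^ k + (ζ ^ k)⁻¹ := by
  rw [← aeval_chebyshevC_add_inv (R := F) hζ]
  exact (aeval_algHom_apply F⟮ζ + ζ⁻¹⟯.val (AdjoinSimple.gen F (ζ + ζ⁻¹)) (Chebyshev.C F k)).symm

variable (F ζ)

theorem zpowAddInv_zero : zpowAddInv F ζ 0 = 2 := by
  rw [zpowAddInv, Chebyshev.C_zero, map_ofNat]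

theorem zpowAddInv_mul (j k : ℤ) :
    zpowAddInv F ζ j * zpowAddInv F ζ k = zpowAddInv F ζ (j + k) + zpowAddInv F ζ (j - k) := by
  simp only [zpowAddInv, ← map_mul, ← map_add, Chebyshev.C_mul_C]

theorem zpowAddInv_sq (k : ℤ) : zpowAddInv F ζ k ^ 2 = zpowAddInv F ζ (2 * k) + 2 := by
  rw [sq, zpowAddInv_mul, sub_self, zpowAddInv_zero, two_mul]

theorem zpowAddInv_mul_sq (j k : ℤ) :
    zpowAddInv F ζ j * zpowAddInv F ζ k ^ 2 =
      zpowAddInv F ζ (2 * k + j) + zpowAddInv F ζ (2 * k - j) + 2 * zpowAddInv F ζ j := by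
  rw [zpowAddInv_sq, mul_add, mul_comm, zpowAddInv_mul, mul_comm _ 2]

end ZpowAddInv

section Trace

variable {F L : Type*} [Field F] [Field L] [Algebra F L] {ζ : L} {t : ℕ}

theorem finrank_adjoin_add_inv_two_pow (hζ : IsPrimitiveRoot ζ (2 ^ (t + 2)))
    (hirr : Irreducible (cyclotomic (2 ^ (t + 2)) F)) :
    Module.finrank F F⟮ζ + ζ⁻¹⟯ = 2 ^ t := by
  have hN : 2 < 2 ^ (t + 2) := lt_self_pow₀ one_lt_two (by omega)
  have h := finrank_adjoin_add_inv_mul_two_eq_totient hN hζ hirr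
  rw [Nat.totient_prime_pow_succ Nat.prime_two, pow_succ] at h
  omega

theorem trace_algebraMap_two_pow (hζ : IsPrimitiveRoot ζ (2 ^ (t + 2)))
    (hirr : Irreducible (cyclotomic (2 ^ (t + 2)) F)) (a : F) :
    Algebra.trace F F⟮ζ + ζ⁻¹⟯ (algebraMap F F⟮ζ + ζ⁻¹⟯ a) = 2 ^ t * a := by
  rw [Algebra.trace_algebraMap, finrank_adjoin_add_inv_two_pow hζ hirr, nsmul_eq_mul,
    Nat.cast_pow, Nat.cast_two]

theorem trace_zpowAddInv_of_not_dvd (hζ : IsPrimitiveRoot ζ (2 ^ (t + 2)))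
    (hirr : Irreducible (cyclotomic (2 ^ (t + 2)) F)) {k : ℤ} (hk : ¬ 2 ^ (t + 1) ∣ k) :
    Algebra.trace F F⟮ζ + ζ⁻¹⟯ (zpowAddInv F ζ k) = 0 := by
  have hint : IsIntegral F ζ := isIntegral_of_isPrimitiveRoot hζ
  have := adjoin.finiteDimensional (hint.add hint.inv)
  have hN := neZero_natCast_of_isPrimitiveRoot F hζ
  have : NeZero (2 : F) := ⟨fun h ↦ hN.out (by simp [h])⟩
  apply trace_eq_zero_of_isConjRoot_neg
  rw [← isConjRoot_algHom_iff F⟮ζ + ζ⁻¹⟯.val, map_neg]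
  change IsConjRoot F (zpowAddInv F ζ k : L) (-(zpowAddInv F ζ k : L))
  rw [coe_zpowAddInv (hζ.ne_zero (NeZero.ne _)), neg_add, ← inv_neg]
  exact isConjRoot_add_inv (isIntegral_zpow hint k) (isConjRoot_zpow_neg_zpow hζ hirr hk)

theorem trace_zpowAddInv_of_pos_of_lt (hζ : IsPrimitiveRoot ζ (2 ^ (t + 2)))
    (hirr : Irreducible (cyclotomic (2 ^ (t + 2)) F)) {k : ℤ} (hk0 : 0 < k)
    (hk : k < 2 ^ (t + 1)) : Algebra.trace F F⟮ζ + ζ⁻¹⟯ (zpowAddInv F ζ k) = 0 :=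
  trace_zpowAddInv_of_not_dvd hζ hirr fun h ↦ hk.not_ge (Int.le_of_dvd hk0 h)

theorem trace_zpowAddInv_of_odd (hζ : IsPrimitiveRoot ζ (2 ^ (t + 2)))
    (hirr : Irreducible (cyclotomic (2 ^ (t + 2)) F)) {k : ℤ} (hk : Odd k) :
    Algebra.trace F F⟮ζ + ζ⁻¹⟯ (zpowAddInv F ζ k) = 0 :=
  trace_zpowAddInv_of_not_dvd hζ hirr fun h ↦
    Int.not_even_iff_odd.2 hk (even_iff_two_dvd.2 ((dvd_pow_self 2 t.succ_ne_zero).trans h))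

theorem zpowAddInv_two_pow (hζ : IsPrimitiveRoot ζ (2 ^ (t + 2))) :
    zpowAddInv F ζ (2 ^ (t + 1)) = -2 := by
  have hhalf : ζ ^ (2 ^ (t + 1) : ℤ) = -1 := by
    simpa using zpow_two_pow_mul_of_odd hζ odd_one
  apply Subtype.ext
  rw [coe_zpowAddInv (hζ.ne_zero (NeZero.ne _)), hhalf, inv_neg_one]
  change (-1 + -1 : L) = -2
  norm_num

theorem trace_zpowAddInv_zero (hζ : IsPrimitiveRoot ζ (2 ^ (t + 2)))
    (hirr : Irreducible (cyclotomic (2 ^ (t + 2)) F)) :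
    Algebra.trace F F⟮ζ + ζ⁻¹⟯ (zpowAddInv F ζ 0) = 2 ^ (t + 1) := by
  rw [zpowAddInv_zero, ← map_ofNat (algebraMap F F⟮ζ + ζ⁻¹⟯) 2,
    trace_algebraMap_two_pow hζ hirr, pow_succ]

theorem trace_zpowAddInv_two_pow (hζ : IsPrimitiveRoot ζ (2 ^ (t + 2)))
    (hirr : Irreducible (cyclotomic (2 ^ (t + 2)) F)) :
    Algebra.trace F F⟮ζ + ζ⁻¹⟯ (zpowAddInv F ζ (2 ^ (t + 1))) = -2 ^ (t + 1) := by
  rw [zpowAddInv_two_pow hζ, ← zpowAddInv_zero, map_neg, trace_zpowAddInv_zero hζ hirr]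

/-- The element `α` of `F⟮ζ + ζ⁻¹⟯`, which twists the trace form `Tr(x y)` into `Tr(α x y)`. -/
noncomputable def alpha (F : Type*) {L : Type*} [Field F] [Field L] [Algebra F L] (ζ : L) :
    F⟮ζ + ζ⁻¹⟯ :=
  4 + zpowAddInv F ζ 1 - 2 * zpowAddInv F ζ 2 - zpowAddInv F ζ 3

theorem trace_alpha (hζ : IsPrimitiveRoot ζ (2 ^ (t + 2)))
    (hirr : Irreducible (cyclotomic (2 ^ (t + 2)) F)) (ht : 0 < t) :
    Algebra.trace F F⟮ζ + ζ⁻¹⟯ (alpha F ζ) = 2 ^ (t + 2) := by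
  have h4 : (2 : ℤ) ^ 2 ≤ 2 ^ (t + 1) := pow_le_pow_right₀ one_le_two (by omega)
  have hzero {k : ℤ} (h0 : 0 < k) (h : k < 4) :
      Algebra.trace F F⟮ζ + ζ⁻¹⟯ (zpowAddInv F ζ k) = 0 :=
    trace_zpowAddInv_of_pos_of_lt hζ hirr h0 (h.trans_le h4)
  have hexp : alpha F ζ = algebraMap F F⟮ζ + ζ⁻¹⟯ 4 + zpowAddInv F ζ 1
      - (2 : F) • zpowAddInv F ζ 2 - zpowAddInv F ζ 3 := by
    simp only [Algebra.smul_def, map_ofNat, alpha]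
  rw [hexp, map_sub, map_sub, map_add, map_smul, trace_algebraMap_two_pow hζ hirr,
    hzero (k := 1) (by norm_num) (by norm_num), hzero (k := 2) (by norm_num) (by norm_num),
    hzero (k := 3) (by norm_num) (by norm_num), smul_zero]
  ring

theorem trace_alpha_mul_zpowAddInv_sq (hζ : IsPrimitiveRoot ζ (2 ^ (t + 2)))
    (hirr : Irreducible (cyclotomic (2 ^ (t + 2)) F)) (ht : 0 < t) (k : ℤ) :
    Algebra.trace F F⟮ζ + ζ⁻¹⟯ (alpha F ζ * zpowAddInv F ζ k ^ 2) =
      2 * 2 ^ (t + 2) + 4 * Algebra.trace F F⟮ζ + ζ⁻¹⟯ (zpowAddInv F ζ (2 * k))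
        - 2 * (Algebra.trace F F⟮ζ + ζ⁻¹⟯ (zpowAddInv F ζ (2 * k + 2))
          + Algebra.trace F F⟮ζ + ζ⁻¹⟯ (zpowAddInv F ζ (2 * k - 2))) := by
  have hexp : alpha F ζ * zpowAddInv F ζ k ^ 2 = (2 : F) • alpha F ζ
      + (4 : F) • zpowAddInv F ζ (2 * k)
      + (zpowAddInv F ζ (2 * k + 1) + zpowAddInv F ζ (2 * k - 1))
      - (2 : F) • (zpowAddInv F ζ (2 * k + 2) + zpowAddInv F ζ (2 * k - 2))
      - (zpowAddInv F ζ (2 * k + 3) + zpowAddInv F ζ (2 * k - 3)) := by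
    simp only [Algebra.smul_def, map_ofNat, alpha]
    linear_combination 4 * zpowAddInv_sq F ζ k + zpowAddInv_mul_sq F ζ 1 k
      - 2 * zpowAddInv_mul_sq F ζ 2 k - zpowAddInv_mul_sq F ζ 3 k
  have hodd {j : ℤ} (hj : Odd j) : Algebra.trace F F⟮ζ + ζ⁻¹⟯ (zpowAddInv F ζ j) = 0 :=
    trace_zpowAddInv_of_odd hζ hirr hj
  simp only [hexp, map_add, map_sub, map_smul, smul_eq_mul, trace_alpha hζ hirr ht,
    hodd (j := 2 * k + 1) (by grind), hodd (j := 2 * k - 1) (by grind),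
    hodd (j := 2 * k + 3) (by grind), hodd (j := 2 * k - 3) (by grind)]
  ring

theorem trace_alpha_mul_zpowAddInv_one_sq (hζ : IsPrimitiveRoot ζ (2 ^ (t + 2)))
    (hirr : Irreducible (cyclotomic (2 ^ (t + 2)) F)) (ht : 2 ≤ t) :
    Algebra.trace F F⟮ζ + ζ⁻¹⟯ (alpha F ζ * zpowAddInv F ζ 1 ^ 2) = 2 ^ (t + 2) := by
  have h8 : (2 : ℤ) ^ 3 ≤ 2 ^ (t + 1) := pow_le_pow_right₀ one_le_two (by omega)
  rw [trace_alpha_mul_zpowAddInv_sq hζ hirr (by omega),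
    trace_zpowAddInv_of_pos_of_lt hζ hirr (by norm_num) (by linarith),
    trace_zpowAddInv_of_pos_of_lt hζ hirr (by norm_num) (by linarith),
    mul_one, sub_self, trace_zpowAddInv_zero hζ hirr]
  ring

theorem trace_alpha_mul_zpowAddInv_sq_of_lt (hζ : IsPrimitiveRoot ζ (2 ^ (t + 2)))
    (hirr : Irreducible (cyclotomic (2 ^ (t + 2)) F)) {k : ℤ} (hk : 2 ≤ k)
    (hkt : k < 2 ^ t - 1) :
    Algebra.trace F F⟮ζ + ζ⁻¹⟯ (alpha F ζ * zpowAddInv F ζ k ^ 2) = 2 ^ (t + 3) := by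
  have ht : 0 < t := by
    by_contra! h
    obtain rfl : t = 0 := by omega
    norm_num at hkt
    omega
  rw [trace_alpha_mul_zpowAddInv_sq hζ hirr ht,
    trace_zpowAddInv_of_pos_of_lt hζ hirr (by omega) (by omega),
    trace_zpowAddInv_of_pos_of_lt hζ hirr (by omega) (by omega),
    trace_zpowAddInv_of_pos_of_lt hζ hirr (by omega) (by omega)]
  ring

theorem trace_alpha_mul_zpowAddInv_last_sq (hζ : IsPrimitiveRoot ζ (2 ^ (t + 2)))
    (hirr : Irreducible (cyclotomic (2 ^ (t + 2)) F)) (ht : 2 ≤ t) :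
    Algebra.trace F F⟮ζ + ζ⁻¹⟯ (alpha F ζ * zpowAddInv F ζ (2 ^ t - 1) ^ 2) =
      3 * 2 ^ (t + 2) := by
  have h4 : (2 : ℤ) ^ 2 ≤ 2 ^ t := pow_le_pow_right₀ one_le_two ht
  rw [trace_alpha_mul_zpowAddInv_sq hζ hirr (by omega),
    trace_zpowAddInv_of_pos_of_lt hζ hirr (k := 2 * (2 ^ t - 1)) (by omega) (by omega),
    trace_zpowAddInv_of_pos_of_lt hζ hirr (k := 2 * (2 ^ t - 1) - 2) (by omega) (by omega),
    show 2 * ((2 : ℤ) ^ t - 1) + 2 = 2 ^ (t + 1) by omega, trace_zpowAddInv_two_pow hζ hirr]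
  ring

end Trace

theorem trace_alpha_ei_ei_general {F L : Type*} [Field F] [Field L] [Algebra F L]
    (r n : ℕ) (hr : 4 ≤ r) (hn : n = 2 ^ (r - 2))
    (ζ : L) (hζ : IsPrimitiveRoot ζ (2 ^ r)) (hirr : Irreducible (cyclotomic (2 ^ r) F))
    (e : ℕ → F⟮ζ + ζ⁻¹⟯) (he0 : e 0 = 1)
    (he : ∀ i : ℕ, 1 ≤ i → ((e i : L) = ζ ^ i + ζ⁻¹ ^ i))
    (α : F⟮ζ + ζ⁻¹⟯) (hα : α = 4 + e 1 - 2 * e 2 - e 3) (i : ℕ) :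
    (i = 0 ∨ i = 1 → Algebra.trace F F⟮ζ + ζ⁻¹⟯ (α * e i * e i) = 2 ^ r) ∧
    (2 ≤ i ∧ i < n - 1 → Algebra.trace F F⟮ζ + ζ⁻¹⟯ (α * e i * e i) = 2 ^ (r + 1)) ∧
    (i = n - 1 → Algebra.trace F F⟮ζ + ζ⁻¹⟯ (α * e i * e i) = 3 * 2 ^ r) := by
  obtain ⟨t, rfl⟩ := Nat.exists_eq_add_of_le' (show 2 ≤ r by omega)
  rw [Nat.add_sub_cancel] at hn
  have hn4 : 4 ≤ n := hn ▸ Nat.pow_le_pow_right two_pos (show 2 ≤ t by omega)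
  have hnt : (n : ℤ) = 2 ^ t := mod_cast hn
  have hez (j : ℕ) (hj : 1 ≤ j) : e j = zpowAddInv F ζ j := by
    apply Subtype.ext
    rw [he j hj, coe_zpowAddInv (hζ.ne_zero (NeZero.ne _)), zpow_natCast, inv_pow]
  obtain rfl : α = alpha F ζ := by
    rw [hα, hez 1 le_rfl, hez 2 one_le_two, hez 3 (by omega)]
    rfl
  rw [mul_assoc, ← sq]
  refine ⟨?_, ?_, ?_⟩
  · rintro (rfl | rfl)
    · rw [he0, one_pow, mul_one, trace_alpha hζ hirr (by omega)]
    · rw [hez 1 le_rfl]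
      exact trace_alpha_mul_zpowAddInv_one_sq hζ hirr (by omega)
  · rintro ⟨hi, hin⟩
    rw [hez i (by omega)]
    exact trace_alpha_mul_zpowAddInv_sq_of_lt hζ hirr (by omega) (by omega)
  · rintro rfl
    rw [hez _ (by omega), show ((n - 1 : ℕ) : ℤ) = 2 ^ t - 1 by omega]
    exact trace_alpha_mul_zpowAddInv_last_sq hζ hirr (by omega)

/-- With `K = ℚ(ζ + ζ⁻¹)` for `ζ` a primitive `2^r`-th root of
unity (`r ≥ 5`), `n = 2^{r-2}`, `e₀ = 1`, `eᵢ = ζ^i + ζ^{-i}`, and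
`α = 4 + e₁ - 2e₂ - e₃`: `Tr(α eᵢ eᵢ) = 2^r` for `i = 0, 1`;
`Tr(α eᵢ eᵢ) = 2^{r+1}` for `2 ≤ i < n - 1`; and `Tr(α eᵢ eᵢ) = 3·2^r` for `i = n - 1`. -/
theorem trace_alpha_ei_ei
    (r n : ℕ) (hr : 5 ≤ r) (hn : n = 2 ^ (r - 2))
    (ζ : ℂ) (hζ : IsPrimitiveRoot ζ (2 ^ r))
    (e : ℕ → ℚ⟮ζ + ζ⁻¹⟯) (he0 : e 0 = 1)
    (he : ∀ i : ℕ, 1 ≤ i → ((e i : ℂ) = ζ ^ i + ζ⁻¹ ^ i))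
    (α : ℚ⟮ζ + ζ⁻¹⟯) (hα : α = 4 + e 1 - 2 * e 2 - e 3)
    (i : ℕ) (hi : i ≤ n - 1) :
    (i = 0 ∨ i = 1 → Algebra.trace ℚ ℚ⟮ζ + ζ⁻¹⟯ (α * e i * e i) = 2 ^ r) ∧
    (2 ≤ i ∧ i < n - 1 → Algebra.trace ℚ ℚ⟮ζ + ζ⁻¹⟯ (α * e i * e i) = 2 ^ (r + 1)) ∧
    (i = n - 1 → Algebra.trace ℚ ℚ⟮ζ + ζ⁻¹⟯ (α * e i * e i) = 3 * 2 ^ r) := by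
  have hirr : Irreducible (cyclotomic (2 ^ r) ℚ) := cyclotomic.irreducible_rat (by positivity)
  exact trace_alpha_ei_ei_general r n (by omega) hn ζ hζ hirr e he0 he α hα i
end

section
/- With K = ℚ(ζ + ζ^{-1}) for ζ a primitive 2^r-th root of unity (r ≥ 5), n = 2^{r-2}, e_0 = 1, e_i = ζ^i + ζ^{-i}, and α = 4 + e_1 - 2e_2 - e_3, let G be the n×n rational matrix with entries G_{ij} = Tr_{K/ℚ}(α e_{i-1} e_{j-1}) / 2^{r-1} for 1 ≤ i, j ≤ n. Then there exists a unimodular integer matrix U (an n×n integer matrix with determinant ±1) such that G = U · G_{D_n} · Uᵀ, where G_{D_n} = B Bᵀ is the Gram matrix of the standard basis of the lattice D_n. In other words, the lattice (1/√(2^{r-1}))·σ_α(O_K) ⊂ ℝ^n is a rotated (isometric) copy of D_n. -/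
open scoped IntermediateField
open Matrix

/-- The standard basis matrix `B` of the lattice `Dₙ`: the rows are
`β₁ = -ε₁ - ε₂` and `βₖ = ε_{k-1} - ε_k` for `2 ≤ k ≤ n` (here `0`-indexed). -/
def DnBasisMatrix (n : ℕ) : Matrix (Fin n) (Fin n) ℤ :=
  Matrix.of fun i j =>
    if (i : ℕ) = 0 then (if (j : ℕ) ≤ 1 then -1 else 0)
    else if (j : ℕ) + 1 = (i : ℕ) then 1 else if j = i then -1 else 0

/-!
Put `θ = ζ + ζ⁻¹` and let `C m` be the rescaled Chebyshev polynomials, so that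
`(C m)(θ) = ζ ^ m + ζ ^ (-m)`. A root of unity of order divisible by `4` has trace `0`, so the
trace of `(C m)(θ)`, divided by `2 ^ (r - 1)`, is `1`, `-1` or `0` according to whether `ζ ^ m` is
`1`, `-1` or neither.

The twisting element factors as `α = (2 - θ) * (2 + θ) ^ 2`, and the Chebyshev polynomials of the
third kind satisfy `(2 + X) * V m = C (m + 1) + C m`. Hence `α * V a * V b` is an integral
combination of six values of `C`, and the normalized trace form in the basis `V 0, …, V (n - 1)`
is the Gram matrix of the vectors `ε (i - 1) - ε (i + 1)` of `ℤ ^ n`, where `ε (-1) = -ε 0` and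
`ε n = ε (n - 1)`. These vectors are a basis of `Dₙ`, and the change of basis from `V` to `e` is
unitriangular: `1 = V 0` and `C i = V i + V (i - 1)`.
-/

open IntermediateField Module Polynomial

theorem nextCoeff_expand {R : Type*} [CommSemiring R] {p : ℕ} (hp : 1 < p) (f : R[X]) :
    (expand R p f).nextCoeff = 0 := by
  rw [nextCoeff_eq_zero, natDegree_expand, coeff_expand (by omega)]
  refine or_iff_not_imp_left.mpr fun hdeg => ⟨Nat.pos_of_ne_zero hdeg, if_neg fun hdvd => ?_⟩
  have hone : p ∣ 1 := by
    simpa [Nat.sub_sub_self (Nat.pos_of_ne_zero hdeg)] using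
      Nat.dvd_sub (dvd_mul_left p f.natDegree) hdvd
  exact hp.ne' (Nat.dvd_one.mp hone)

theorem trace_eq_zero_of_not_squarefree {L : Type*} [Field L] [CharZero L]
    [FiniteDimensional ℚ L] {μ : L} {N : ℕ} [NeZero N] (hμ : IsPrimitiveRoot μ N)
    (hN : ¬ Squarefree N) : Algebra.trace ℚ L μ = 0 := by
  obtain ⟨p, hp, m, rfl⟩ : ∃ p, p.Prime ∧ p * p ∣ N := by
    simpa [Nat.squarefree_iff_prime_squarefree] using hN
  rw [trace_eq_finrank_mul_minpoly_nextCoeff, ← cyclotomic_eq_minpoly_rat hμ (NeZero.pos _),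
    show p * p * m = p * m * p by ring, ← cyclotomic_expand_eq_cyclotomic hp (dvd_mul_right p m),
    nextCoeff_expand hp.one_lt, neg_zero, mul_zero]

/-- The normalized trace of `z ^ m`, for `z` a primitive `2 * N`-th root of unity with `N` a power
of two: the value `z ^ m` itself when it is `1` or `-1`, and `0` otherwise. -/
def rootTrace (N : ℕ) (m : ℤ) : ℤ :=
  if 2 * (N : ℤ) ∣ m then 1 else if (N : ℤ) ∣ m then -1 else 0

theorem rootTrace_neg (N : ℕ) (m : ℤ) : rootTrace N (-m) = rootTrace N m := by
  simp only [rootTrace, dvd_neg]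

theorem rootTrace_of_lt {N : ℕ} {m : ℤ} (hm : -N < m) (hm' : m < 2 * N) :
    rootTrace N m = (if m = 0 then 1 else 0) - if m = N then 1 else 0 := by
  have hdvd : 2 * (N : ℤ) ∣ m ↔ m = 0 :=
    ⟨fun h => Int.eq_zero_of_abs_lt_dvd h (abs_lt.mpr ⟨by omega, hm'⟩), by simp +contextual⟩
  have hdvd' : (N : ℤ) ∣ m ↔ m = 0 ∨ m = N := by
    refine ⟨fun h => ?_, by rintro (rfl | rfl) <;> simp⟩
    rcases lt_or_ge m N with hlt | hge
    · exact .inl (Int.eq_zero_of_abs_lt_dvd h (abs_lt.mpr ⟨hm, hlt⟩))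
    · have := Int.eq_zero_of_abs_lt_dvd (dvd_sub_self_right.mpr h)
        ((abs_lt (a := m - N)).mpr ⟨by omega, by omega⟩)
      omega
  simp only [rootTrace, hdvd, hdvd']
  split_ifs <;> omega

section

variable {L : Type*} [Field L] [CharZero L] [FiniteDimensional ℚ L]

theorem trace_zpow_eq_zero {z : L} {s : ℕ} (hz : IsPrimitiveRoot z (2 ^ (s + 1))) {m : ℤ}
    (hm : ¬ ((2 ^ s : ℕ) : ℤ) ∣ m) : Algebra.trace ℚ L (z ^ m) = 0 := by
  obtain ⟨j, -, hj⟩ := (Nat.dvd_prime_pow Nat.prime_two).mp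
    (orderOf_dvd_of_pow_eq_one (x := z ^ m) (n := 2 ^ (s + 1)) (by
      rw [← zpow_natCast, zpow_comm, zpow_natCast, hz.pow_eq_one, _root_.one_zpow]))
  have hj_dvd : ¬ 2 ^ j ∣ 2 := by
    rw [← hj, orderOf_dvd_iff_pow_eq_one, ← zpow_natCast, ← _root_.zpow_mul,
      hz.zpow_eq_one_iff_dvd, pow_succ, Nat.cast_mul]
    exact mt (Int.dvd_of_mul_dvd_mul_right two_ne_zero) hm
  have hj_two : 2 ≤ j := by
    by_contra! hlt
    exact hj_dvd (pow_dvd_pow 2 (Nat.le_of_lt_succ hlt))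
  have hμ : IsPrimitiveRoot (z ^ m) (2 ^ j) := hj ▸ IsPrimitiveRoot.orderOf (z ^ m)
  refine trace_eq_zero_of_not_squarefree hμ fun hsq => ?_
  exact absurd (hsq 2 ((pow_two 2).symm.dvd.trans (pow_dvd_pow 2 hj_two))) (by decide)

theorem trace_zpow_eq_finrank_mul_rootTrace {z : L} {s : ℕ}
    (hz : IsPrimitiveRoot z (2 ^ (s + 1))) (m : ℤ) :
    Algebra.trace ℚ L (z ^ m) = finrank ℚ L * rootTrace (2 ^ s) m := by
  have hone : 2 * ((2 ^ s : ℕ) : ℤ) ∣ m ↔ z ^ m = 1 := by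
    rw [hz.zpow_eq_one_iff_dvd, pow_succ', Nat.cast_mul, Nat.cast_two]
  rw [rootTrace]
  split_ifs with hfull hhalf
  · rw [hone.mp hfull, ← map_one (algebraMap ℚ L), Algebra.trace_algebraMap]
    simp
  · obtain ⟨t, rfl⟩ := hhalf
    have hneg : z ^ (2 ^ s) = -1 :=
      (hz.pow (by positivity) (pow_succ 2 s)).eq_neg_one_of_two_right
    have hzt : z ^ (((2 ^ s : ℕ) : ℤ) * t) = (-1) ^ t := by
      rw [_root_.zpow_mul, zpow_natCast, hneg]
    have ht : Odd t := by
      by_contra! ht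
      exact hfull (hone.mpr (hzt.trans (Int.not_odd_iff_even.mp ht).neg_one_zpow))
    rw [hzt, ht.neg_one_zpow, ← map_one (algebraMap ℚ L), ← map_neg, Algebra.trace_algebraMap]
    simp
  · rw [trace_zpow_eq_zero hz hhalf, Int.cast_zero, mul_zero]

theorem trace_eq_of_algebraMap_eq_zpow_add {K : Type*} [Field K] [CharZero K] [Algebra K L]
    {z : L} {s : ℕ} (hz : IsPrimitiveRoot z (2 ^ (s + 1))) {x : K} {m : ℤ}
    (hx : algebraMap K L x = z ^ m + z ^ (-m)) :
    Algebra.trace ℚ K x = 2 * finrank ℚ K * rootTrace (2 ^ s) m := by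
  have hKL : FiniteDimensional K L := .right ℚ K L
  have hK : FiniteDimensional ℚ K := .left ℚ K L
  have hpos : (finrank K L : ℚ) ≠ 0 := Nat.cast_ne_zero.mpr finrank_pos.ne'
  refine mul_left_cancel₀ hpos ?_
  calc (finrank K L : ℚ) * Algebra.trace ℚ K x
      = Algebra.trace ℚ L (algebraMap K L x) := by
        rw [← Algebra.trace_trace (S := K) (algebraMap K L x), Algebra.trace_algebraMap, map_nsmul,
          nsmul_eq_mul]
    _ = 2 * (finrank ℚ L * rootTrace (2 ^ s) m) := by
        rw [hx, map_add, trace_zpow_eq_finrank_mul_rootTrace hz,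
          trace_zpow_eq_finrank_mul_rootTrace hz, rootTrace_neg, two_mul]
    _ = finrank K L * (2 * finrank ℚ K * rootTrace (2 ^ s) m) := by
        rw [← finrank_mul_finrank ℚ K L]
        push_cast
        ring

end

section

variable {F : Type*} [Field F] [CharZero F] {ζ : F} {N : ℕ} [NeZero N]

theorem isCyclotomicExtension_adjoin_adjoin_add_inv (hζ : IsPrimitiveRoot ζ N) :
    IsCyclotomicExtension {N} ℚ ℚ⟮ζ + ζ⁻¹⟯⟮ζ⟯ := by
  have hadjoin : ℚ⟮ζ + ζ⁻¹⟯⟮ζ⟯.restrictScalars ℚ = ℚ⟮ζ⟯ := by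
    refine (restrictScalars_adjoin_eq_sup ℚ _ _).trans (sup_eq_right.mpr ?_)
    have hmem := mem_adjoin_simple_self ℚ ζ
    exact adjoin_simple_le_iff.mpr (add_mem hmem (inv_mem hmem))
  have hcyclo : IsCyclotomicExtension {N} ℚ ℚ⟮ζ⟯.toSubalgebra := by
    rw [adjoin_simple_toSubalgebra_of_isAlgebraic
      (hζ.isIntegral (NeZero.pos N)).tower_top.isAlgebraic]
    exact hζ.adjoin_isCyclotomicExtension ℚ
  rw [← hadjoin] at hcyclo
  exact hcyclo

theorem exists_algEquiv_eq_inv {L : Type*} [Field L] [CharZero L] [Normal ℚ L] {z : L}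
    (hz : IsPrimitiveRoot z N) : ∃ σ : Gal(L/ℚ), σ z = z⁻¹ :=
  (Normal.minpoly_eq_iff_mem_orbit L).mp <| by
    rw [← cyclotomic_eq_minpoly_rat hz (NeZero.pos N),
      ← cyclotomic_eq_minpoly_rat hz.inv (NeZero.pos N)]

theorem notMem_adjoin_add_inv_s6 (hζ : IsPrimitiveRoot ζ N) (hN : 2 < N) : ζ ∉ ℚ⟮ζ + ζ⁻¹⟯ := by
  intro hmem
  have := isCyclotomicExtension_adjoin_adjoin_add_inv hζ
  have := IsCyclotomicExtension.isGalois {N} ℚ ℚ⟮ζ + ζ⁻¹⟯⟮ζ⟯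
  let z := AdjoinSimple.gen ℚ⟮ζ + ζ⁻¹⟯ ζ
  have hz : IsPrimitiveRoot z N := IsPrimitiveRoot.coe_submonoidClass_iff.mp hζ
  obtain ⟨σ, hσ⟩ := exists_algEquiv_eq_inv hz
  have hfix : σ.toAlgHom.comp (IsScalarTower.toAlgHom ℚ ℚ⟮ζ + ζ⁻¹⟯ ℚ⟮ζ + ζ⁻¹⟯⟮ζ⟯) =
      IsScalarTower.toAlgHom ℚ ℚ⟮ζ + ζ⁻¹⟯ ℚ⟮ζ + ζ⁻¹⟯⟮ζ⟯ := by
    refine adjoin_algHom_ext ℚ ?_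
    rintro _ rfl
    change σ (z + z⁻¹) = z + z⁻¹
    rw [map_add, map_inv₀, hσ, inv_inv]
    exact add_comm _ _
  have hself : σ z = z := DFunLike.congr_fun hfix ⟨ζ, hmem⟩
  have hsq : z ^ 2 = 1 := by
    rw [sq, mul_eq_one_iff_eq_inv₀ (hz.ne_zero (NeZero.ne N)), ← hσ, hself]
  exact hN.not_ge (Nat.le_of_dvd two_pos (hz.dvd_of_pow_eq_one 2 hsq))

theorem finrank_adjoin_adjoin_add_inv (hζ : IsPrimitiveRoot ζ N) (hN : 2 < N) :
    finrank ℚ⟮ζ + ζ⁻¹⟯ ℚ⟮ζ + ζ⁻¹⟯⟮ζ⟯ = 2 := by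
  let p : ℚ⟮ζ + ζ⁻¹⟯[X] := X ^ 2 - C (AdjoinSimple.gen ℚ (ζ + ζ⁻¹)) * X + 1
  have hdeg : p.natDegree = 2 := by simp only [p]; compute_degree!
  have hmonic : p.Monic := by simp only [p]; monicity!
  have hroot : aeval ζ p = 0 := by
    have hζ0 : ζ ≠ 0 := hζ.ne_zero (NeZero.ne N)
    simp only [p, map_add, map_sub, map_mul, map_pow, aeval_X, aeval_C, map_one,
      AdjoinSimple.algebraMap_gen]
    field_simp
    ring
  have hint : IsIntegral ℚ⟮ζ + ζ⁻¹⟯ ζ := ⟨p, hmonic, hroot⟩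
  rw [adjoin.finrank hint]
  refine le_antisymm (hdeg ▸ natDegree_le_of_dvd (minpoly.dvd _ ζ hroot) hmonic.ne_zero) ?_
  rw [minpoly.two_le_natDegree_iff hint]
  rintro ⟨x, hx⟩
  have hmem : algebraMap _ F x ∈ ℚ⟮ζ + ζ⁻¹⟯ := x.2
  exact notMem_adjoin_add_inv_s6 hζ hN (by rwa [hx] at hmem)

theorem finrank_adjoin_add_inv_mul_two_s6 (hζ : IsPrimitiveRoot ζ N) (hN : 2 < N) :
    finrank ℚ ℚ⟮ζ + ζ⁻¹⟯ * 2 = N.totient := by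
  have := isCyclotomicExtension_adjoin_adjoin_add_inv hζ
  rw [← finrank_adjoin_adjoin_add_inv hζ hN, finrank_mul_finrank,
    IsCyclotomicExtension.finrank _ (cyclotomic.irreducible_rat (NeZero.pos N))]

end

theorem trace_adjoin_add_inv_of_coe_eq {F : Type*} [Field F] [CharZero F] {ζ : F} {s : ℕ}
    (hζ : IsPrimitiveRoot ζ (2 ^ (s + 1))) (hs : 0 < s) {x : ℚ⟮ζ + ζ⁻¹⟯} {m : ℤ}
    (hx : (x : F) = ζ ^ m + ζ ^ (-m)) :
    Algebra.trace ℚ ℚ⟮ζ + ζ⁻¹⟯ x = 2 ^ s * rootTrace (2 ^ s) m := by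
  have hN : 2 < 2 ^ (s + 1) := lt_self_pow₀ one_lt_two (by omega)
  have := isCyclotomicExtension_adjoin_adjoin_add_inv hζ
  have := IsCyclotomicExtension.finiteDimensional {2 ^ (s + 1)} ℚ ℚ⟮ζ + ζ⁻¹⟯⟮ζ⟯
  have hz : IsPrimitiveRoot (AdjoinSimple.gen ℚ⟮ζ + ζ⁻¹⟯ ζ) (2 ^ (s + 1)) :=
    IsPrimitiveRoot.coe_submonoidClass_iff.mp hζ
  have hfinrank : finrank ℚ ℚ⟮ζ + ζ⁻¹⟯ * 2 = 2 ^ s := by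
    rw [finrank_adjoin_add_inv_mul_two_s6 hζ hN, Nat.totient_prime_pow_succ Nat.prime_two,
      Nat.add_one_sub_one, mul_one]
  have hfinrank' : (finrank ℚ ℚ⟮ζ + ζ⁻¹⟯ : ℚ) * 2 = 2 ^ s := mod_cast hfinrank
  rw [trace_eq_of_algebraMap_eq_zpow_add hz (Subtype.ext hx), mul_comm 2, hfinrank']

section

open Polynomial.Chebyshev

theorem eval_chebyshevC_add_inv {F : Type*} [Field F] {x : F} (hx : x ≠ 0) (m : ℤ) :
    (Chebyshev.C F m).eval (x + x⁻¹) = x ^ m + x ^ (-m) := by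
  induction m using Polynomial.Chebyshev.induct' with
  | zero => simp [one_add_one_eq_two]
  | one => simp
  | add_two k ih1 ih0 =>
    simp only [C_add_two, eval_sub, eval_mul, eval_X, ih1, ih0, _root_.zpow_neg, zpow_add₀ hx]
    field_simp
    ring
  | neg k ih => rw [C_neg, ih, neg_neg, add_comm]

variable (R : Type*) [CommRing R]

/-- The Chebyshev polynomials of the third kind, rescaled like `Polynomial.Chebyshev.S`:
`V m (2 cos t) = cos ((m + 1 / 2) t) / cos (t / 2)`. -/
noncomputable def chebyshevV (m : ℤ) : R[X] := S R m - S R (m - 1)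

theorem chebyshevV_zero : chebyshevV R 0 = 1 := by simp [chebyshevV]

theorem chebyshevV_add_chebyshevV_sub_one (m : ℤ) :
    chebyshevV R m + chebyshevV R (m - 1) = Chebyshev.C R m := by
  have hS := S_eq R m
  have hC := C_eq_S_sub_X_mul_S R m
  rw [chebyshevV, chebyshevV, show m - 1 - 1 = m - 2 by ring]
  linear_combination -hC - hS

theorem two_add_X_mul_chebyshevV (m : ℤ) :
    (2 + X) * chebyshevV R m = Chebyshev.C R (m + 1) + Chebyshev.C R m := by
  rw [← chebyshevV_add_chebyshevV_sub_one, ← chebyshevV_add_chebyshevV_sub_one]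
  have hsucc := S_add_one R m
  have hself := S_eq R m
  simp only [chebyshevV, add_sub_cancel_right, show m - 1 - 1 = m - 2 by ring]
  linear_combination hself - hsucc

/-- The twisting element `α`, as a polynomial in `ζ + ζ⁻¹`. -/
noncomputable def twistPolynomial : R[X] :=
  4 + Chebyshev.C R 1 - 2 * Chebyshev.C R 2 - Chebyshev.C R 3

theorem twistPolynomial_eq : twistPolynomial R = (2 - X) * (2 + X) * (2 + X) := by
  rw [twistPolynomial, show (3 : ℤ) = 1 + 2 by norm_num, C_add_two, one_add_one_eq_two,
    C_two, C_one]
  ring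

theorem twistPolynomial_mul_chebyshevV_mul_chebyshevV (a b : ℤ) :
    twistPolynomial R * chebyshevV R a * chebyshevV R b =
      2 * Chebyshev.C R (a + b + 1) - Chebyshev.C R (a + b + 3) - Chebyshev.C R (a + b - 1) +
      (2 * Chebyshev.C R (a - b) - Chebyshev.C R (a - b + 2) - Chebyshev.C R (a - b - 2)) := by
  have hX (m : ℤ) : X * Chebyshev.C R m = Chebyshev.C R (m + 1) + Chebyshev.C R (m - 1) := by
    rw [C_add_one, sub_add_cancel]
  calc twistPolynomial R * chebyshevV R a * chebyshevV R b
      = (2 - X) * (((2 + X) * chebyshevV R a) * ((2 + X) * chebyshevV R b)) := by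
        rw [twistPolynomial_eq]; ring
    _ = (2 - X) * (Chebyshev.C R (a + b + 2) + 2 * Chebyshev.C R (a + b + 1) +
          Chebyshev.C R (a + b) + (Chebyshev.C R (a - b + 1) + 2 * Chebyshev.C R (a - b) +
          Chebyshev.C R (a - b - 1))) := by
        rw [two_add_X_mul_chebyshevV, two_add_X_mul_chebyshevV, add_mul]
        simp only [mul_add, C_mul_C]
        ring_nf
    _ = _ := by
        simp only [sub_mul, mul_add, mul_left_comm X 2, hX]
        ring_nf

end

/-- The Gram matrix of the family `v` for the bilinear form `(x, y) ↦ Λ (a * x * y)`; for `Λ` a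
trace, this is the Gram matrix of the image of `v` under the embedding twisted by `a`. -/
def twistedGram {R A ι : Type*} [CommSemiring R] [Semiring A] [Algebra R A] (Λ : A →ₗ[R] R)
    (a : A) (v : ι → A) : Matrix ι ι R :=
  Matrix.of fun i j => Λ (a * v i * v j)

theorem twistedGram_sum_smul {R A ι κ : Type*} [CommSemiring R] [Semiring A] [Algebra R A]
    [Fintype κ] (Λ : A →ₗ[R] R) (a : A) (v : κ → A) (P : Matrix ι κ R) :
    twistedGram Λ a (fun i => ∑ k, P i k • v k) = P * twistedGram Λ a v * Pᵀ := by
  ext i j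
  simp only [twistedGram, of_apply, mul_apply, transpose_apply, Finset.sum_mul, Finset.mul_sum,
    mul_smul_comm, smul_mul_assoc, map_sum, map_smul, smul_eq_mul]
  exact Finset.sum_congr rfl fun k _ => Finset.sum_congr rfl fun l _ => by ring

theorem sum_ite_val_eq {M : Type*} [AddCommMonoid M] {n : ℕ} (m : ℕ) (f : Fin n → M) :
    (∑ j : Fin n, if (j : ℕ) = m then f j else 0) = if h : m < n then f ⟨m, h⟩ else 0 := by
  split_ifs with h
  · rw [Fintype.sum_eq_single ⟨m, h⟩ fun j hj => if_neg (mt Fin.ext hj), if_pos rfl]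
  · exact Finset.sum_eq_zero fun j _ => if_neg (by omega)

/-- The coordinates of `1, C 1, C 2, …` in `V 0, V 1, V 2, …`: row `i` is `ε i + ε (i - 1)`, where
`ε (-1)` is read as `0`. -/
def adjacentSumMatrix (n : ℕ) : Matrix (Fin n) (Fin n) ℤ :=
  Matrix.of fun i j => (if j = i then 1 else 0) + if (j : ℕ) + 1 = i then 1 else 0

/-- The coordinates of the rows of `foldedDifferenceMatrix n` in the rows of `DnBasisMatrix n`. -/
def foldedCoordMatrix (n : ℕ) : Matrix (Fin n) (Fin n) ℤ :=
  Matrix.of fun i j =>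
    (if j = i then 1 else 0) + if (i : ℕ) ≠ 0 then if (j : ℕ) = i + 1 then 1 else 0 else 0

/-- The matrix with rows `ε (i - 1) - ε (i + 1)`, folded at both ends by `ε (-1) = -ε 0` and
`ε n = ε (n - 1)`. The truncated `i - 1` and the `min` supply the folded indices. -/
def foldedDifferenceMatrix (n : ℕ) : Matrix (Fin n) (Fin n) ℤ :=
  Matrix.of fun i j =>
    (if (i : ℕ) = 0 then -1 else 1) * (if (j : ℕ) = i - 1 then 1 else 0) -
      if (j : ℕ) = min ((i : ℕ) + 1) (n - 1) then 1 else 0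

theorem det_adjacentSumMatrix (n : ℕ) : (adjacentSumMatrix n).det = 1 := by
  have h : (adjacentSumMatrix n).BlockTriangular OrderDual.toDual := fun i j (hij : i < j) => by
    simp only [adjacentSumMatrix, of_apply]
    grind
  rw [det_of_isLowerTriangular _ h]
  exact Finset.prod_eq_one fun i _ => by simp [adjacentSumMatrix]

theorem det_foldedCoordMatrix (n : ℕ) : (foldedCoordMatrix n).det = 1 := by
  have h : (foldedCoordMatrix n).BlockTriangular id := fun i j (hij : j < i) => by
    simp only [foldedCoordMatrix, of_apply]
    grind
  rw [det_of_isUpperTriangular h]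
  exact Finset.prod_eq_one fun i _ => by simp [foldedCoordMatrix]

theorem foldedCoordMatrix_mul_DnBasisMatrix {n : ℕ} (hn : 1 < n) :
    foldedCoordMatrix n * DnBasisMatrix n = foldedDifferenceMatrix n := by
  ext i j
  have hsum : (foldedCoordMatrix n * DnBasisMatrix n) i j = DnBasisMatrix n i j +
      if (i : ℕ) ≠ 0 then
        if h : (i : ℕ) + 1 < n then DnBasisMatrix n ⟨i + 1, h⟩ j else 0
      else 0 := by
    by_cases hi : (i : ℕ) = 0 <;>
      simp [mul_apply, foldedCoordMatrix, add_mul, Finset.sum_add_distrib, sum_ite_val_eq, hi]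
  rw [hsum]
  simp only [DnBasisMatrix, foldedDifferenceMatrix, of_apply, Fin.ext_iff]
  grind

theorem foldedDifferenceMatrix_mulVec {n : ℕ} (f : Fin n → ℤ) (i : Fin n) :
    (foldedDifferenceMatrix n *ᵥ f) i =
      (if (i : ℕ) = 0 then -1 else 1) * f ⟨i - 1, by omega⟩ -
        f ⟨min ((i : ℕ) + 1) (n - 1), by omega⟩ := by
  simp only [mulVec, dotProduct, foldedDifferenceMatrix, of_apply, sub_mul, mul_assoc,
    Finset.sum_sub_distrib, ← Finset.mul_sum, boole_mul, sum_ite_val_eq]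
  rw [dif_pos (by omega), dif_pos (by omega)]

theorem foldedDifferenceMatrix_mul_transpose_apply {n : ℕ} (hn : 1 < n) (i j : Fin n) :
    (foldedDifferenceMatrix n * (foldedDifferenceMatrix n)ᵀ) i j =
      2 * (if (i : ℕ) = j then 1 else 0) - (if (i : ℕ) + 2 = j then 1 else 0) -
        (if (i : ℕ) = j + 2 then 1 else 0) + (if (i : ℕ) + j + 3 = 2 * n then 1 else 0) -
        (if (i : ℕ) + j = 1 then 1 else 0) := by
  refine (foldedDifferenceMatrix_mulVec (foldedDifferenceMatrix n j) i).trans ?_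
  simp only [foldedDifferenceMatrix, of_apply]
  have hpred : (if (i : ℕ) = 0 then -1 else 1) * ((if (j : ℕ) = 0 then -1 else 1) *
      if (i : ℕ) - 1 = j - 1 then 1 else 0) =
      (if (i : ℕ) = j then 1 else 0) - if (i : ℕ) + j = 1 then (1 : ℤ) else 0 := by
    split_ifs <;> omega
  have hsucc : (if min ((i : ℕ) + 1) (n - 1) = min ((j : ℕ) + 1) (n - 1) then (1 : ℤ) else 0) =
      (if (i : ℕ) = j then 1 else 0) + if (i : ℕ) + j + 3 = 2 * n then 1 else 0 := by
    split_ifs <;> omega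
  have hcross : ((if (i : ℕ) = 0 then -1 else 1) *
      if (i : ℕ) - 1 = min ((j : ℕ) + 1) (n - 1) then 1 else 0) =
      if (i : ℕ) = j + 2 then (1 : ℤ) else 0 := by
    split_ifs <;> omega
  have hcross' : ((if (j : ℕ) = 0 then -1 else 1) *
      if min ((i : ℕ) + 1) (n - 1) = (j : ℕ) - 1 then 1 else 0) =
      if (i : ℕ) + 2 = j then (1 : ℤ) else 0 := by
    split_ifs <;> omega
  linear_combination hpred + hsucc - hcross - hcross'

theorem foldedDifferenceMatrix_mul_transpose_eq_rootTrace {n : ℕ} (hn : 1 < n) (i j : Fin n) :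
    (foldedDifferenceMatrix n * (foldedDifferenceMatrix n)ᵀ) i j =
      2 * rootTrace (2 * n) (i + j + 1) - rootTrace (2 * n) (i + j + 3) -
        rootTrace (2 * n) (i + j - 1) +
      (2 * rootTrace (2 * n) (i - j) - rootTrace (2 * n) (i - j + 2) -
        rootTrace (2 * n) (i - j - 2)) := by
  have hsum : rootTrace (2 * n) (i + j + 1) = 0 := by
    rw [rootTrace_of_lt] <;> grind
  have hsum_add : rootTrace (2 * n) (i + j + 3) = -if (i : ℕ) + j + 3 = 2 * n then 1 else 0 := by
    rw [rootTrace_of_lt] <;> grind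
  have hsum_sub : rootTrace (2 * n) (i + j - 1) = if (i : ℕ) + j = 1 then 1 else 0 := by
    rw [rootTrace_of_lt] <;> grind
  have hdiff : rootTrace (2 * n) (i - j) = if (i : ℕ) = j then 1 else 0 := by
    rw [rootTrace_of_lt] <;> grind
  have hdiff_add : rootTrace (2 * n) (i - j + 2) = if (i : ℕ) + 2 = j then 1 else 0 := by
    rw [rootTrace_of_lt] <;> grind
  have hdiff_sub : rootTrace (2 * n) (i - j - 2) = if (i : ℕ) = j + 2 then 1 else 0 := by
    rw [rootTrace_of_lt] <;> grind
  rw [foldedDifferenceMatrix_mul_transpose_apply hn, hsum, hsum_add, hsum_sub, hdiff, hdiff_add,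
    hdiff_sub]
  ring

theorem twistedGram_chebyshevV {R : Type*} [CommRing R] {n : ℕ} (hn : 1 < n) (Λ : R[X] →ₗ[R] R)
    (hΛ : ∀ m, Λ (Chebyshev.C R m) = rootTrace (2 * n) m) :
    twistedGram Λ (twistPolynomial R) (fun i : Fin n => chebyshevV R i) =
      (foldedDifferenceMatrix n * (foldedDifferenceMatrix n)ᵀ).map (Int.castRingHom R) := by
  ext i j
  rw [map_apply, foldedDifferenceMatrix_mul_transpose_eq_rootTrace hn, twistedGram, of_apply,
    twistPolynomial_mul_chebyshevV_mul_chebyshevV]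
  simp only [two_mul (Chebyshev.C R _), map_add, map_sub, hΛ, map_mul, map_ofNat,
    Int.coe_castRingHom]
  ring

theorem sum_adjacentSumMatrix_smul_chebyshevV (R : Type*) [CommRing R] {n : ℕ} (i : Fin n) :
    ∑ k, (adjacentSumMatrix n).map (Int.castRingHom R) i k • chebyshevV R k =
      if (i : ℕ) = 0 then 1 else Chebyshev.C R i := by
  have hsum : ∑ k, (adjacentSumMatrix n).map (Int.castRingHom R) i k • chebyshevV R k =
      chebyshevV R i + ∑ k : Fin n, if (k : ℕ) + 1 = i then chebyshevV R k else 0 := by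
    simp [adjacentSumMatrix, add_smul, Finset.sum_add_distrib]
  rw [hsum]
  split_ifs with hi
  · simp [hi, chebyshevV_zero]
  · have hpred (k : ℕ) : k + 1 = i ↔ k = (i : ℕ) - 1 := by omega
    simp only [hpred]
    rw [sum_ite_val_eq, dif_pos (by omega), Nat.cast_pred (Nat.pos_of_ne_zero hi),
      chebyshevV_add_chebyshevV_sub_one]

theorem exists_isUnit_det_twistedGram_eq {R : Type*} [CommRing R] {n : ℕ} (hn : 1 < n)
    (Λ : R[X] →ₗ[R] R) (hΛ : ∀ m, Λ (Chebyshev.C R m) = rootTrace (2 * n) m) :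
    ∃ U : Matrix (Fin n) (Fin n) ℤ, IsUnit U.det ∧
      twistedGram Λ (twistPolynomial R)
          (fun i : Fin n => if (i : ℕ) = 0 then 1 else Chebyshev.C R i) =
        U.map (Int.castRingHom R) *
          (DnBasisMatrix n * (DnBasisMatrix n)ᵀ).map (Int.castRingHom R) *
          (U.map (Int.castRingHom R))ᵀ := by
  refine ⟨adjacentSumMatrix n * foldedCoordMatrix n, ?_, ?_⟩
  · rw [det_mul, det_adjacentSumMatrix, det_foldedCoordMatrix, mul_one]
    exact isUnit_one
  · simp only [← sum_adjacentSumMatrix_smul_chebyshevV]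
    rw [twistedGram_sum_smul, twistedGram_chebyshevV hn Λ hΛ,
      ← foldedCoordMatrix_mul_DnBasisMatrix hn]
    simp only [Matrix.map_mul, transpose_mul, transpose_map, Matrix.mul_assoc]

theorem coe_aeval_gen_chebyshevC {F : Type*} [Field F] [CharZero F] {ζ : F} (hζ : ζ ≠ 0) (m : ℤ) :
    (aeval (AdjoinSimple.gen ℚ (ζ + ζ⁻¹)) (Chebyshev.C ℚ m) : F) = ζ ^ m + ζ ^ (-m) := by
  rw [← eval_chebyshevC_add_inv hζ, ← IntermediateField.algebraMap_apply, Chebyshev.aeval_C,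
    Chebyshev.algebraMap_eval_C, AdjoinSimple.algebraMap_gen]

/-- The linear form `p ↦ Tr (p(ζ + ζ⁻¹)) / 2 ^ s`. -/
noncomputable def normalizedTrace {F : Type*} [Field F] [CharZero F] (ζ : F) (s : ℕ) :
    ℚ[X] →ₗ[ℚ] ℚ :=
  ((2 : ℚ) ^ s)⁻¹ •
    (Algebra.trace ℚ ℚ⟮ζ + ζ⁻¹⟯ ∘ₗ (aeval (AdjoinSimple.gen ℚ (ζ + ζ⁻¹))).toLinearMap)

theorem normalizedTrace_apply {F : Type*} [Field F] [CharZero F] (ζ : F) (s : ℕ) (p : ℚ[X]) :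
    normalizedTrace ζ s p =
      Algebra.trace ℚ ℚ⟮ζ + ζ⁻¹⟯ (aeval (AdjoinSimple.gen ℚ (ζ + ζ⁻¹)) p) / 2 ^ s :=
  (div_eq_inv_mul _ _).symm

theorem normalizedTrace_chebyshevC {F : Type*} [Field F] [CharZero F] {ζ : F} {s : ℕ}
    (hζ : IsPrimitiveRoot ζ (2 ^ (s + 1))) (hs : 0 < s) (m : ℤ) :
    normalizedTrace ζ s (Chebyshev.C ℚ m) = rootTrace (2 ^ s) m := by
  have hcoe := coe_aeval_gen_chebyshevC (hζ.ne_zero (by positivity)) m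
  rw [normalizedTrace_apply, trace_adjoin_add_inv_of_coe_eq hζ hs hcoe,
    mul_div_cancel_left₀ _ (by positivity)]

theorem gram_matrix_is_rotated_Dn_general {F : Type*} [Field F] [CharZero F]
    (r n : ℕ) (hr : 3 ≤ r) (hn : n = 2 ^ (r - 2))
    (ζ : F) (hζ : IsPrimitiveRoot ζ (2 ^ r))
    (e : ℕ → ℚ⟮ζ + ζ⁻¹⟯) (he0 : e 0 = 1)
    (he : ∀ i : ℕ, 1 ≤ i → ((e i : F) = ζ ^ i + ζ⁻¹ ^ i))
    (α : ℚ⟮ζ + ζ⁻¹⟯) (hα : α = 4 + e 1 - 2 * e 2 - e 3)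
    (G : Matrix (Fin n) (Fin n) ℚ)
    (hG : ∀ i j : Fin n,
      G i j = Algebra.trace ℚ ℚ⟮ζ + ζ⁻¹⟯ (α * e (i : ℕ) * e (j : ℕ)) / 2 ^ (r - 1)) :
    ∃ U : Matrix (Fin n) (Fin n) ℤ, IsUnit U.det ∧
      G = (U.map (Int.cast : ℤ → ℚ)) *
            ((DnBasisMatrix n * (DnBasisMatrix n)ᵀ).map (Int.cast : ℤ → ℚ)) *
            (U.map (Int.cast : ℤ → ℚ))ᵀ := by
  obtain ⟨s, rfl⟩ : ∃ s, r = s + 2 := ⟨r - 2, by omega⟩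
  have hn1 : 1 < n := hn ▸ Nat.one_lt_two_pow (by omega)
  have h2n : 2 * n = 2 ^ (s + 1) := by rw [hn, Nat.add_sub_cancel, pow_succ']
  let θ := AdjoinSimple.gen ℚ (ζ + ζ⁻¹)
  have heθ (i : ℕ) : e i = aeval θ (if i = 0 then 1 else Chebyshev.C ℚ i) := by
    split_ifs with hi
    · rw [hi, he0, map_one]
    · refine Subtype.ext ((he i (by omega)).trans ?_)
      rw [coe_aeval_gen_chebyshevC (hζ.ne_zero (by positivity)), zpow_natCast, _root_.zpow_neg,
        zpow_natCast, inv_pow]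
  have hαθ : α = aeval θ (twistPolynomial ℚ) := by
    simp [hα, heθ, twistPolynomial, map_ofNat (aeval θ)]
  obtain ⟨U, hU, hgram⟩ := exists_isUnit_det_twistedGram_eq hn1 (normalizedTrace ζ (s + 1))
    fun m => h2n ▸ normalizedTrace_chebyshevC hζ s.succ_pos m
  refine ⟨U, hU, .trans ?_ hgram⟩
  ext i j
  rw [hG, heθ, heθ, hαθ, ← map_mul, ← map_mul, twistedGram, of_apply, normalizedTrace_apply]
  rfl

/-- With `K = ℚ(ζ + ζ⁻¹)` for `ζ` a primitive `2^r`-th root of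
unity (`r ≥ 5`), `n = 2^{r-2}`, `e₀ = 1`, `eᵢ = ζ^i + ζ^{-i}`,
`α = 4 + e₁ - 2e₂ - e₃`, the matrix `G` with entries
`G_{ij} = Tr(α e_{i-1} e_{j-1}) / 2^{r-1}` satisfies `G = U · (B Bᵀ) · Uᵀ` for some
unimodular integer matrix `U`, i.e. the lattice `(1/√(2^{r-1}))·σ_α(O_K)` is a
rotated copy of `Dₙ`. -/
theorem gram_matrix_is_rotated_Dn
    (r n : ℕ) (hr : 5 ≤ r) (hn : n = 2 ^ (r - 2))
    (ζ : ℂ) (hζ : IsPrimitiveRoot ζ (2 ^ r))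
    (e : ℕ → ℚ⟮ζ + ζ⁻¹⟯) (he0 : e 0 = 1)
    (he : ∀ i : ℕ, 1 ≤ i → ((e i : ℂ) = ζ ^ i + ζ⁻¹ ^ i))
    (α : ℚ⟮ζ + ζ⁻¹⟯) (hα : α = 4 + e 1 - 2 * e 2 - e 3)
    (G : Matrix (Fin n) (Fin n) ℚ)
    (hG : ∀ i j : Fin n,
      G i j = Algebra.trace ℚ ℚ⟮ζ + ζ⁻¹⟯ (α * e (i : ℕ) * e (j : ℕ)) / 2 ^ (r - 1)) :
    ∃ U : Matrix (Fin n) (Fin n) ℤ, IsUnit U.det ∧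
      G = (U.map (Int.cast : ℤ → ℚ)) *
            ((DnBasisMatrix n * (DnBasisMatrix n)ᵀ).map (Int.cast : ℤ → ℚ)) *
            (U.map (Int.cast : ℤ → ℚ))ᵀ := by
  exact gram_matrix_is_rotated_Dn_general r n (by omega) hn ζ hζ e he0 he α hα G hG
end

section
/- With K = ℚ(ζ + ζ^{-1}) for ζ a primitive 2^r-th root of unity (r ≥ 5), n = 2^{r-2}, O_K = ℤ[ζ + ζ^{-1}], α = 4 + e_1 - 2e_2 - e_3 where e_i = ζ^i + ζ^{-i}, and σ_1, …, σ_n the real embeddings of K, the set { ∏_{i=1}^{n} √(σ_i(α)/2^r) · |σ_i(y)| : y ∈ O_K, y ≠ 0 } has a least element, equal to 2^{(3 - r n)/2}. (This is the relative minimum product distance of the rotated D_n-lattice (1/√(2^{r-1}))σ_α(O_K), after rescaling to unit minimum norm.) -/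
open scoped IntermediateField

/-!
Put `ξ = ζ + ζ⁻¹`. Then `α = (2 + ξ)² (2 - ξ)`, and the minimal polynomial of `ξ` is the rescaled
Chebyshev polynomial `C_n`, characterised by `C_n (z + z⁻¹) = zⁿ + z⁻ⁿ`. Evaluating it at `±2` gives
`N(2 - ξ) = 2` and `N(2 + ξ) = ±2`, hence `N(α) = 8`. As `C_n ≥ 2` on `[2, ∞)`, all conjugates of
`ξ` are less than `2` and `α` is totally nonnegative, so the product attached to `y` is
`√(8 / 2 ^ (r n)) * |N(y)|`. The norm of a nonzero algebraic integer has absolute value at least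
`1`, with equality for `y = 1`.

The minimal polynomial is identified without proving that `C_n` is irreducible: `ℚ(ξ)` has `n`
real embeddings, so its degree cannot be smaller than `n`.
-/

section Chebyshev

open Polynomial

theorem isMonicOfDegree_chebyshev_C (R : Type*) [CommRing R] [Nontrivial R] :
    ∀ {n : ℕ}, n ≠ 0 → (Chebyshev.C R n).IsMonicOfDegree n
  | 1, _ => by simpa using isMonicOfDegree_X R
  | 2, _ => by
    have h : (2 : R[X]).natDegree < 2 := by simp
    simpa [Chebyshev.C_two] using (isMonicOfDegree_X_pow R 2).sub h
  | n + 3, _ => by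
    have h₁ := isMonicOfDegree_chebyshev_C R (n + 1).succ_ne_zero
    have h₂ := isMonicOfDegree_chebyshev_C R n.succ_ne_zero
    have hrec : Chebyshev.C R (n + 3 : ℕ) =
        X * Chebyshev.C R (n + 2 : ℕ) - Chebyshev.C R (n + 1 : ℕ) :=
      mod_cast Chebyshev.C_add_two R (n + 1 : ℕ)
    have hmul : (X * Chebyshev.C R (n + 2 : ℕ)).IsMonicOfDegree (n + 3) := by
      convert (isMonicOfDegree_X R).mul h₁ using 1
      omega
    rw [hrec]
    exact hmul.sub (h₂.natDegree_eq.trans_lt (by omega))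

theorem chebyshev_C_eval_add_of_mul_eq_one {R : Type*} [CommRing R] {x y : R} (h : x * y = 1)
    (n : ℕ) : (Chebyshev.C R n).eval (x + y) = x ^ n + y ^ n := by
  rw [← dickson_one_one_eq_chebyshev_C, dickson_one_one_eval_add_inv x y h]

theorem isRoot_chebyshev_C_add_inv {F : Type*} [Field F] {ζ : F} {n : ℕ} (hn : n ≠ 0)
    (hζ : IsPrimitiveRoot ζ (4 * n)) : (Chebyshev.C F n).IsRoot (ζ + ζ⁻¹) := by
  have hζ0 : ζ ≠ 0 := hζ.ne_zero (by positivity)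
  have hsq : (ζ ^ n) ^ 2 = -1 := by
    rw [← pow_mul]
    exact (hζ.pow (by positivity) (by ring : 4 * n = n * 2 * 2)).eq_neg_one_of_two_right
  rw [IsRoot, chebyshev_C_eval_add_of_mul_eq_one (mul_inv_cancel₀ hζ0), inv_pow]
  field_simp
  linear_combination hsq

theorem two_le_chebyshev_C_eval_real (n : ℤ) {x : ℝ} (hx : 2 ≤ x) :
    2 ≤ (Chebyshev.C ℝ n).eval x := by
  obtain ⟨t, rfl⟩ : ∃ t, x = 2 * Real.cosh t :=
    ⟨Real.arcosh (x / 2), by rw [Real.cosh_arcosh (by linarith)]; ring⟩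
  rw [Chebyshev.C_two_mul_real_cosh]
  linarith [Real.one_le_cosh (n * t)]

theorem map_lt_two_of_isRoot_chebyshev_C {R : Type*} [CommRing R] (φ : R →+* ℝ) {n : ℤ} {x : R}
    (hx : (Chebyshev.C R n).IsRoot x) : φ x < 2 := by
  have hφ : (Chebyshev.C ℝ n).IsRoot (φ x) := by
    rw [← Chebyshev.map_C φ]
    exact hx.map
  by_contra! h
  linarith [two_le_chebyshev_C_eval_real n h, hφ.eq_zero]

theorem isIntegral_of_isRoot_chebyshev_C (R : Type*) {A : Type*} [CommRing R] [Nontrivial R]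
    [CommRing A] [Algebra R A] {n : ℕ} (hn : n ≠ 0) {x : A} (hx : (Chebyshev.C A n).IsRoot x) :
    IsIntegral R x :=
  ⟨Chebyshev.C R n, (isMonicOfDegree_chebyshev_C R hn).monic, (Chebyshev.aeval_C x n).trans hx⟩

end Chebyshev

section Norm

open Polynomial

theorem norm_algebraMap_sub_powerBasis_gen {R S : Type*} [CommRing R] [CommRing S] [Algebra R S]
    (pb : PowerBasis R S) (t : R) :
    Algebra.norm R (algebraMap R S t - pb.gen) = (minpoly R pb.gen).eval t := by
  rw [Algebra.norm_eq_matrix_det pb.basis, map_sub, AlgHom.commutes, ← charpoly_leftMulMatrix,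
    Matrix.eval_charpoly, Matrix.scalar_apply, Matrix.algebraMap_eq_diagonal]
  rfl

theorem norm_two_add_gen_sq_mul_two_sub_gen {R S : Type*} [CommRing R] [CommRing S] [Algebra R S]
    (pb : PowerBasis R S) {n : ℤ} (hmin : minpoly R pb.gen = Chebyshev.C R n) :
    Algebra.norm R ((2 + pb.gen) ^ 2 * (2 - pb.gen)) = 8 := by
  have hsub : Algebra.norm R (2 - pb.gen) = 2 := by
    rw [← map_ofNat (algebraMap R S) 2, norm_algebraMap_sub_powerBasis_gen, hmin,
      Chebyshev.C_eval_two]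
  have hadd : Algebra.norm R (-2 - pb.gen) = 2 * n.negOnePow := by
    rw [← map_ofNat (algebraMap R S) 2, ← map_neg, norm_algebraMap_sub_powerBasis_gen, hmin,
      Chebyshev.C_eval_neg_two]
  have hunit : ((n.negOnePow : ℤ) : R) ^ 2 = 1 := by
    rw [← Int.cast_pow, ← Units.val_pow_eq_pow_val, Int.units_sq, Units.val_one, Int.cast_one]
  have hsq : (2 + pb.gen) ^ 2 = (-2 - pb.gen) ^ 2 := by ring
  rw [hsq, map_mul, map_pow, hadd, hsub]
  linear_combination 8 * hunit

/- Over an algebraic closure of `E` the norm is the product over all embeddings, and by counting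
these are the `σ i`. -/
theorem algebraMap_norm_eq_prod_of_card_eq_finrank {F K E ι : Type*} [Field F] [Field K] [Field E]
    [Algebra F K] [Algebra F E] [FiniteDimensional F K] [Algebra.IsSeparable F K] [Fintype ι]
    {σ : ι → K →ₐ[F] E} (hσ : Function.Injective σ) (hcard : Fintype.card ι = Module.finrank F K)
    (x : K) : algebraMap F E (Algebra.norm F x) = ∏ i, σ i x := by
  let toClosure : E →ₐ[F] AlgebraicClosure E := IsScalarTower.toAlgHom F E (AlgebraicClosure E)
  have hinj : Function.Injective fun i ↦ toClosure.comp (σ i) := fun i j hij ↦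
    hσ (AlgHom.ext fun y ↦ toClosure.injective (DFunLike.congr_fun hij y))
  have hbij : Function.Bijective fun i ↦ toClosure.comp (σ i) :=
    (Fintype.bijective_iff_injective_and_card _).2
      ⟨hinj, hcard.trans (AlgHom.card F K (AlgebraicClosure E)).symm⟩
  exact toClosure.injective <|
    calc toClosure (algebraMap F E (Algebra.norm F x))
      _ = algebraMap F (AlgebraicClosure E) (Algebra.norm F x) := toClosure.commutes _
      _ = ∏ τ : K →ₐ[F] AlgebraicClosure E, τ x := Algebra.norm_eq_prod_embeddings F _ x
      _ = ∏ i, toClosure (σ i x) := (hbij.prod_comp fun τ ↦ τ x).symm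
      _ = toClosure (∏ i, σ i x) := (map_prod toClosure _ _).symm

theorem one_le_abs_norm_of_isIntegral {K : Type*} [Field K] [Algebra ℚ K] [FiniteDimensional ℚ K]
    {x : K} (hx : IsIntegral ℤ x) (hx0 : x ≠ 0) : 1 ≤ |Algebra.norm ℚ x| := by
  obtain ⟨m, hm⟩ := IsIntegrallyClosed.isIntegral_iff.1 (Algebra.isIntegral_norm ℚ hx)
  have hm0 : m ≠ 0 := by
    rintro rfl
    exact Algebra.norm_ne_zero_iff.2 hx0 (hm.symm.trans (map_zero _))
  rw [← hm, eq_intCast]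
  exact_mod_cast Int.one_le_abs hm0

end Norm

open Polynomial in
theorem minpoly_gen_eq_of_isMonicOfDegree_card {F K E ι : Type*} [Field F] [Field K] [Field E]
    [Algebra F K] [Algebra F E] [Fintype ι] (pb : PowerBasis F K) {σ : ι → K →ₐ[F] E}
    (hσ : Function.Injective σ) {f : F[X]} (hf : f.IsMonicOfDegree (Fintype.card ι))
    (hroot : aeval pb.gen f = 0) : minpoly F pb.gen = f := by
  have := pb.finite
  have hdeg : f.natDegree ≤ (minpoly F pb.gen).natDegree :=
    calc f.natDegree = Nat.card ι := by rw [hf.natDegree_eq, Nat.card_eq_fintype_card]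
      _ ≤ Nat.card (K →ₐ[F] E) := Nat.card_le_card_of_injective σ hσ
      _ ≤ Module.finrank F K := card_algHom_le_finrank F K E
      _ = (minpoly F pb.gen).natDegree := by rw [pb.finrank, pb.natDegree_minpoly]
  exact (eq_of_monic_of_dvd_of_natDegree_le (minpoly.monic pb.isIntegral_gen) hf.monic
    (minpoly.dvd F pb.gen hroot) hdeg).symm

theorem isLeast_prod_sqrt_mul_abs {K ι : Type*} [Field K] [Algebra ℚ K] [FiniteDimensional ℚ K]
    [Fintype ι] {σ : ι → K →ₐ[ℚ] ℝ} (hσ : Function.Injective σ)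
    (hcard : Fintype.card ι = Module.finrank ℚ K) {α : K} (hα : ∀ i, 0 ≤ σ i α) {c : ℝ}
    (hc : 0 ≤ c) {O : Subalgebra ℤ K} (hO : O ≤ integralClosure ℤ K) :
    IsLeast {x : ℝ | ∃ y ∈ O, y ≠ 0 ∧ x = ∏ i, √(σ i α / c) * |σ i y|}
      √(Algebra.norm ℚ α / c ^ Fintype.card ι) := by
  have hnorm (x : K) : ∏ i, σ i x = (Algebra.norm ℚ x : ℝ) := by
    rw [← algebraMap_norm_eq_prod_of_card_eq_finrank hσ hcard, eq_ratCast]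
  have hprod (y : K) : ∏ i, √(σ i α / c) * |σ i y| =
      √(Algebra.norm ℚ α / c ^ Fintype.card ι) * |(Algebra.norm ℚ y : ℝ)| := by
    rw [Finset.prod_mul_distrib, ← Finset.abs_prod, hnorm,
      ← Real.sqrt_prod _ fun i _ ↦ div_nonneg (hα i) hc, Finset.prod_div_distrib, hnorm,
      Finset.prod_const, Finset.card_univ]
  refine ⟨⟨1, one_mem _, one_ne_zero, by rw [hprod]; simp⟩, ?_⟩
  rintro _ ⟨y, hy, hy0, rfl⟩
  rw [hprod]
  exact le_mul_of_one_le_right (Real.sqrt_nonneg _)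
    (mod_cast one_le_abs_norm_of_isIntegral (hO hy) hy0)

open Polynomial in
theorem isLeast_prod_sqrt_mul_abs_of_isRoot_chebyshev_C {K ι : Type*} [Field K] [Algebra ℚ K]
    [Fintype ι] [Nonempty ι] (pb : PowerBasis ℚ K)
    (hroot : (Chebyshev.C K (Fintype.card ι)).IsRoot pb.gen)
    {σ : ι → K →ₐ[ℚ] ℝ} (hσ : Function.Injective σ) {c : ℝ} (hc : 0 ≤ c) {α : K}
    (hα : α = (2 + pb.gen) ^ 2 * (2 - pb.gen)) :
    IsLeast {x : ℝ | ∃ y ∈ Algebra.adjoin ℤ {pb.gen}, y ≠ 0 ∧ x = ∏ i, √(σ i α / c) * |σ i y|}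
      √(8 / c ^ Fintype.card ι) := by
  have hC := isMonicOfDegree_chebyshev_C ℚ (Fintype.card_ne_zero (α := ι))
  have hmin : minpoly ℚ pb.gen = Chebyshev.C ℚ (Fintype.card ι) :=
    minpoly_gen_eq_of_isMonicOfDegree_card pb hσ hC ((Chebyshev.aeval_C _ _).trans hroot)
  have := pb.finite
  have hcard : Fintype.card ι = Module.finrank ℚ K := by
    rw [pb.finrank, ← pb.natDegree_minpoly, hmin, hC.natDegree_eq]
  have hnorm : Algebra.norm ℚ α = 8 := by rw [hα, norm_two_add_gen_sq_mul_two_sub_gen pb hmin]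
  have hnonneg (i : ι) : 0 ≤ σ i α := by
    have hlt : σ i pb.gen < 2 := map_lt_two_of_isRoot_chebyshev_C (σ i : K →+* ℝ) hroot
    rw [hα, map_mul, map_pow, map_sub, map_ofNat]
    exact mul_nonneg (sq_nonneg _) (sub_nonneg.2 hlt.le)
  simpa only [hnorm, Rat.cast_ofNat] using isLeast_prod_sqrt_mul_abs hσ hcard hnonneg hc
    (adjoin_le_integralClosure
      (isIntegral_of_isRoot_chebyshev_C ℤ Fintype.card_ne_zero hroot))

theorem sqrt_pow_div_pow_pow {b : ℝ} (hb : 0 < b) (k r n : ℕ) :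
    √(b ^ k / (b ^ r) ^ n) = b ^ (((k : ℝ) - r * n) / 2) := by
  rw [Real.sqrt_eq_rpow, div_eq_mul_one_div (_ - _), Real.rpow_mul hb.le, Real.rpow_sub hb,
    ← Nat.cast_mul, Real.rpow_natCast, Real.rpow_natCast, pow_mul]

theorem add_sub_pow_add_inv_pow_eq_two_add_sq_mul_two_sub {F : Type*} [Field F] {ζ : F}
    (hζ : ζ ≠ 0) :
    4 + (ζ + ζ⁻¹) - 2 * (ζ ^ 2 + ζ⁻¹ ^ 2) - (ζ ^ 3 + ζ⁻¹ ^ 3) =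
      (2 + (ζ + ζ⁻¹)) ^ 2 * (2 - (ζ + ζ⁻¹)) := by
  field_simp
  ring

theorem relative_minimum_product_distance_Dn_two_power_general
    {L : Type*} [Field L] [Algebra ℚ L] {r n : ℕ} (hr : 2 ≤ r) (hn : n = 2 ^ (r - 2))
    {ζ : L} (hζ : IsPrimitiveRoot ζ (2 ^ r)) {ξ : ℚ⟮ζ + ζ⁻¹⟯} (hξ : (ξ : L) = ζ + ζ⁻¹)
    {α : ℚ⟮ζ + ζ⁻¹⟯}
    (hα : (α : L) = 4 + (ζ + ζ⁻¹) - 2 * (ζ ^ 2 + ζ⁻¹ ^ 2) - (ζ ^ 3 + ζ⁻¹ ^ 3))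
    {σ : Fin n → (ℚ⟮ζ + ζ⁻¹⟯ →+* ℝ)} (hσ : Function.Injective σ) :
    IsLeast { x : ℝ | ∃ y ∈ Algebra.adjoin ℤ ({ξ} : Set ℚ⟮ζ + ζ⁻¹⟯), y ≠ 0 ∧
        x = ∏ i, Real.sqrt (σ i α / 2 ^ r) * |σ i y| }
      ((2 : ℝ) ^ (((3 : ℝ) - r * n) / 2)) := by
  have hn0 : n ≠ 0 := by rw [hn]; positivity
  have : NeZero n := ⟨hn0⟩
  have hζ_four : IsPrimitiveRoot ζ (4 * n) := by
    rwa [hn, show 4 = 2 ^ 2 from rfl, ← pow_add, Nat.add_sub_cancel' hr]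
  have hrootL := isRoot_chebyshev_C_add_inv hn0 hζ_four
  -- The power basis is over this `ℚ`-algebra structure; instance search finds the one on division
  -- rings, which is not definitionally equal to it.
  let _ : Algebra ℚ ℚ⟮ζ + ζ⁻¹⟯ := ℚ⟮ζ + ζ⁻¹⟯.algebra'
  let pb := IntermediateField.adjoin.powerBasis (isIntegral_of_isRoot_chebyshev_C ℚ hn0 hrootL)
  obtain rfl : ξ = pb.gen := Subtype.ext hξ
  have hroot : (Polynomial.Chebyshev.C ℚ⟮ζ + ζ⁻¹⟯ n).IsRoot pb.gen := by
    refine .of_map (f := algebraMap ℚ⟮ζ + ζ⁻¹⟯ L) ?_ (algebraMap ℚ⟮ζ + ζ⁻¹⟯ L).injective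
    rwa [Polynomial.Chebyshev.map_C]
  have hfactor : α = (2 + pb.gen) ^ 2 * (2 - pb.gen) :=
    Subtype.ext <| hα.trans <|
      add_sub_pow_add_inv_pow_eq_two_add_sq_mul_two_sub (hζ.ne_zero (by positivity))
  have hvalue : √(8 / (2 ^ r) ^ Fintype.card (Fin n)) = (2 : ℝ) ^ (((3 : ℝ) - r * n) / 2) := by
    rw [Fintype.card_fin]
    convert sqrt_pow_div_pow_pow two_pos 3 r n using 3 <;> norm_num
  rw [← hvalue]
  exact isLeast_prod_sqrt_mul_abs_of_isRoot_chebyshev_C pb (by simpa using hroot)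
    (σ := fun i ↦ (σ i).toRatAlgHom) ((RingHom.equivRatAlgHom _ _).injective.comp hσ)
    (by positivity) hfactor

/-- With `K = ℚ(ζ + ζ⁻¹)` for `ζ` a primitive `2^r`-th root of unity
(`r ≥ 5`), `n = 2^{r-2}`, `O_K = ℤ[ζ + ζ⁻¹]`, `α = 4 + e₁ - 2e₂ - e₃` and
`σ₁, …, σₙ` the real embeddings of `K`, the set
`{ ∏ᵢ √(σᵢ(α)/2^r) · |σᵢ y| : y ∈ O_K, y ≠ 0 }` has least element `2^{(3-rn)/2}`. -/
theorem relative_minimum_product_distance_Dn_two_power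
    (r n : ℕ) (hr : 5 ≤ r) (hn : n = 2 ^ (r - 2))
    (ζ : ℂ) (hζ : IsPrimitiveRoot ζ (2 ^ r))
    (ξ : ℚ⟮ζ + ζ⁻¹⟯) (hξ : (ξ : ℂ) = ζ + ζ⁻¹)
    (e : ℕ → ℚ⟮ζ + ζ⁻¹⟯) (he0 : e 0 = 1)
    (he : ∀ i : ℕ, 1 ≤ i → ((e i : ℂ) = ζ ^ i + ζ⁻¹ ^ i))
    (α : ℚ⟮ζ + ζ⁻¹⟯) (hα : α = 4 + e 1 - 2 * e 2 - e 3)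
    (σ : Fin n → (ℚ⟮ζ + ζ⁻¹⟯ →+* ℝ)) (hσ : Function.Bijective σ) :
    IsLeast { x : ℝ | ∃ y ∈ Algebra.adjoin ℤ ({ξ} : Set ℚ⟮ζ + ζ⁻¹⟯), y ≠ 0 ∧
        x = ∏ i, Real.sqrt (σ i α / 2 ^ r) * |σ i y| }
      ((2 : ℝ) ^ (((3 : ℝ) - r * n) / 2)) :=
  relative_minimum_product_distance_Dn_two_power_general (by omega) hn hζ hξ
    (by rw [hα]; push_cast [he, pow_one]; rfl) hσ.injective
end

section
/- With K = ℚ(ζ + ζ^{-1}) for ζ a primitive 2^r-th root of unity (r ≥ 5), n = 2^{r-2}, e_0 = 1, e_i = ζ^i + ζ^{-i}, and α' = 2 + e_1, define g_k = Σ_{j=0}^{n-k} (-1)^j e_j for 1 ≤ k ≤ n. Then g_1, …, g_n is a ℤ-basis of O_K = ℤ[ζ + ζ^{-1}] and Tr_{K/ℚ}(α' g_k g_l) = 2^{r-1} if k = l, and Tr_{K/ℚ}(α' g_k g_l) = 0 if k ≠ l. Equivalently, the lattice (1/√(2^{r-1}))·σ_{α'}(O_K) is a rotated (isometric) copy of ℤ^n.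 -/
open scoped IntermediateField
open Polynomial

/-!
The alternating signs disappear on replacing `ξ = ζ + ζ⁻¹` by `η = -ξ`, the trace of the root
of unity `-ζ`: then `(-1) ^ j * e j = C_j(η)` for `j ≥ 1` and the rescaled Chebyshev
polynomials `C_j`, `α' = 2 - η`, and the `g k` are the values `D_0(η), …, D_{n-1}(η)`
of the partial sums `D_m = 1 + C_1 + ⋯ + C_m`, in reverse order.

These satisfy `C_j D_m = D_{m+j} + D_{m-j}` and `(2 - X) D_k D_l = C_{k-l} - C_{k+l+1}`, and
`C_n(η) = 0` forces `D_{2n-1-m}(η) = D_m(η)`. With `D_{-1-m} = -D_m` this brings every index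
back to `0, …, n - 1`, so the `D_m(η)` span `ℤ[η]`, and the matrix of multiplication by `C_j(η)`
in terms of them can be read off: for `0 < |j| < 2n` its diagonal entries cancel under
`i ↦ n - 1 - i`, so that `C_j(η)` has trace zero. Linear independence holds because `C_n` is
Eisenstein at `2` when `n` is a power of `2`, so that `[K : ℚ] = n`.
-/

section DirichletPoly

variable (R : Type*) [CommRing R]

/-- The Dirichlet kernel as a polynomial in `x + x⁻¹`: for `m ≥ 0` its value there is
`∑_{|j| ≤ m} x ^ j`, so it is a rescaled Chebyshev polynomial of the fourth kind.
Like `Chebyshev.S` it is indexed by all integers, which keeps its product formulas free of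
case distinctions. -/
noncomputable def dirichletPoly (m : ℤ) : R[X] :=
  Chebyshev.S R m + Chebyshev.S R (m - 1)

theorem dirichletPoly_zero : dirichletPoly R 0 = 1 := by
  simp [dirichletPoly]

theorem map_dirichletPoly {R' : Type*} [CommRing R'] (f : R →+* R') (m : ℤ) :
    (dirichletPoly R m).map f = dirichletPoly R' m := by
  simp [dirichletPoly]

theorem dirichletPoly_neg_one_sub (m : ℤ) : dirichletPoly R (-1 - m) = -dirichletPoly R m := by
  rw [dirichletPoly, dirichletPoly, show -1 - m = -(m - 1) - 2 by ring, Chebyshev.S_neg_sub_two,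
    show -(m - 1) - 2 - 1 = -m - 2 by ring, Chebyshev.S_neg_sub_two]
  ring

theorem dirichletPoly_add_one (m : ℤ) :
    dirichletPoly R (m + 1) = X * dirichletPoly R m - dirichletPoly R (m - 1) := by
  have h := Chebyshev.S_eq R m
  rw [dirichletPoly, dirichletPoly, dirichletPoly, Chebyshev.S_add_one, add_sub_cancel_right]
  linear_combination (norm := ring_nf) h

theorem dirichletPoly_eq_add_chebyshevC (m : ℤ) :
    dirichletPoly R m = dirichletPoly R (m - 1) + Chebyshev.C R m := by
  have h₁ := Chebyshev.S_eq R m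
  have h₂ := Chebyshev.C_eq_S_sub_X_mul_S R m
  rw [dirichletPoly, dirichletPoly]
  linear_combination (norm := ring_nf) -h₁ - h₂

theorem chebyshevC_mul_dirichletPoly (j m : ℤ) :
    Chebyshev.C R j * dirichletPoly R m = dirichletPoly R (m + j) + dirichletPoly R (m - j) := by
  induction j using Chebyshev.induct with
  | zero => simp [two_mul]
  | one => rw [Chebyshev.C_one, dirichletPoly_add_one]; ring
  | add_two j ih₁ ih₂ =>
    have h₁ := dirichletPoly_add_one R (m + j + 1)
    have h₂ := dirichletPoly_add_one R (m - (j + 1))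
    have h₃ := Chebyshev.C_add_two R j
    linear_combination (norm := ring_nf)
      dirichletPoly R m * h₃ - h₁ - h₂ + X * ih₁ - ih₂
  | neg_add_one j ih₁ ih₂ =>
    have h₁ := dirichletPoly_add_one R (m + -j)
    have h₂ := dirichletPoly_add_one R (m - -j)
    have h₃ := Chebyshev.C_sub_one R (-j)
    linear_combination (norm := ring_nf)
      dirichletPoly R m * h₃ - h₁ - h₂ + X * ih₁ - ih₂

theorem two_sub_X_mul_dirichletPoly (m : ℤ) :
    (2 - X) * dirichletPoly R m = Chebyshev.C R m - Chebyshev.C R (m + 1) := by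
  rw [Chebyshev.C_eq_S_sub_X_mul_S, Chebyshev.C_eq_S_sub_X_mul_S, dirichletPoly,
    Chebyshev.S_add_one, add_sub_cancel_right]
  ring

theorem two_sub_X_mul_dirichletPoly_mul_dirichletPoly (k l : ℤ) :
    (2 - X) * dirichletPoly R k * dirichletPoly R l =
      Chebyshev.C R (k - l) - Chebyshev.C R (k + l + 1) := by
  have h₁ := dirichletPoly_eq_add_chebyshevC R (l + k + 1)
  have h₂ := dirichletPoly_eq_add_chebyshevC R (l - k)
  have h₃ := Chebyshev.C_neg R (l - k)
  rw [two_sub_X_mul_dirichletPoly, sub_mul, chebyshevC_mul_dirichletPoly,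
    chebyshevC_mul_dirichletPoly]
  linear_combination (norm := ring_nf) h₂ - h₁ - h₃

end DirichletPoly

section ChebyshevC

variable (R : Type*) [CommRing R]

theorem natDegree_chebyshevC_int (n : ℕ) : (Chebyshev.C ℤ n).natDegree = n := by
  have h := congrArg natDegree (Chebyshev.C_comp_two_mul_X ℤ n)
  rwa [natDegree_comp, ← C_ofNat, natDegree_C_mul_X _ two_ne_zero, mul_one,
    natDegree_C_mul two_ne_zero, Chebyshev.natDegree_T, Int.natAbs_natCast] at h

theorem monic_chebyshevC {n : ℕ} (hn : n ≠ 0) : (Chebyshev.C R n).Monic := by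
  have h : (Chebyshev.C ℤ n).Monic := by
    have h := congrArg leadingCoeff (Chebyshev.C_comp_two_mul_X ℤ n)
    have hdeg : natDegree (2 * X : ℤ[X]) ≠ 0 := by
      rw [← C_ofNat, natDegree_C_mul_X _ two_ne_zero]
      exact one_ne_zero
    rw [leadingCoeff_comp hdeg, natDegree_chebyshevC_int, ← C_ofNat, leadingCoeff_C_mul_X,
      leadingCoeff_mul, leadingCoeff_C, Chebyshev.leadingCoeff_T, Int.natAbs_natCast,
      mul_pow_sub_one hn] at h
    exact mul_right_cancel₀ (pow_ne_zero n two_ne_zero) (h.trans (one_mul _).symm)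
  simpa using h.map (Int.castRingHom R)

theorem natDegree_chebyshevC [Nontrivial R] (n : ℕ) : (Chebyshev.C R n).natDegree = n := by
  obtain rfl | hn := eq_or_ne n 0
  · simp
  · rw [← Chebyshev.map_C (Int.castRingHom R), (monic_chebyshevC ℤ hn).natDegree_map,
      natDegree_chebyshevC_int]

theorem chebyshevC_pow_charP (p : ℕ) [Fact p.Prime] [CharP R p] (k : ℕ) :
    Chebyshev.C R (p ^ k : ℕ) = X ^ p ^ k := by
  induction k with
  | zero => simp
  | succ k ih =>
    rw [pow_succ, Nat.cast_mul, Chebyshev.C_mul, ih, ← dickson_one_one_eq_chebyshev_C,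
      dickson_one_one_charP]
    simp [← pow_mul, mul_comm]

theorem chebyshevC_two_mul_eval_zero (n : ℤ) :
    (Chebyshev.C R (2 * n)).eval 0 = 2 * n.negOnePow := by
  rw [mul_comm, Chebyshev.C_mul, eval_comp, Chebyshev.C_two]
  simp

variable {R} in
theorem chebyshevC_eval_add_of_mul_eq_one {x y : R} (h : x * y = 1) (n : ℕ) :
    (Chebyshev.C R n).eval (x + y) = x ^ n + y ^ n := by
  rw [← dickson_one_one_eq_chebyshev_C, dickson_one_one_eval_add_inv x y h]

theorem isEisensteinAt_chebyshevC_two_pow (k : ℕ) :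
    (Chebyshev.C ℤ (2 ^ (k + 1) : ℕ)).IsEisensteinAt (Ideal.span {2}) where
  leading := by
    rw [(monic_chebyshevC ℤ (by positivity)).leadingCoeff, Ideal.mem_span_singleton]
    decide
  mem {i} hi := by
    rw [natDegree_chebyshevC] at hi
    have h := congrArg (coeff · i) (chebyshevC_pow_charP (ZMod 2) 2 (k + 1))
    rw [← Chebyshev.map_C (Int.castRingHom _)] at h
    simp only [coeff_map, coeff_X_pow, hi.ne, if_false, eq_intCast] at h
    exact Ideal.mem_span_singleton.2 ((ZMod.intCast_zmod_eq_zero_iff_dvd _ 2).1 h)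
  notMem := by
    rw [coeff_zero_eq_eval_zero, pow_succ' 2 k, Nat.cast_mul, Nat.cast_two,
      chebyshevC_two_mul_eval_zero, Ideal.span_singleton_pow, Ideal.mem_span_singleton,
      pow_two, Int.cast_id, mul_dvd_mul_iff_left two_ne_zero]
    exact fun h ↦ absurd (isUnit_of_dvd_unit h (Units.isUnit _)) (by decide)

theorem irreducible_chebyshevC_two_pow (k : ℕ) : Irreducible (Chebyshev.C ℚ (2 ^ k : ℕ)) := by
  obtain _ | k := k
  · simpa using irreducible_X
  · have hmonic := monic_chebyshevC ℤ (n := 2 ^ (k + 1)) (by positivity)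
    have h := (isEisensteinAt_chebyshevC_two_pow k).irreducible
      ((Ideal.span_singleton_prime two_ne_zero).2 Int.prime_two) hmonic.isPrimitive
      (by rw [natDegree_chebyshevC]; positivity)
    simpa using (hmonic.irreducible_iff_irreducible_map_fraction_map (K := ℚ)).1 h

end ChebyshevC

section Adjoin

variable (R : Type*) {A : Type*} [CommRing R] [CommRing A] [Algebra R A]

theorem adjoin_singleton_neg (x : A) : Algebra.adjoin R {-x} = Algebra.adjoin R {x} := by
  have h (y : A) : Algebra.adjoin R {-y} ≤ Algebra.adjoin R {y} :=
    Algebra.adjoin_singleton_le (neg_mem (Algebra.self_mem_adjoin_singleton R y))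
  exact (h x).antisymm (by simpa using h (-x))

variable {R}

theorem adjoin_singleton_toSubmodule_le {x : A} {M : Submodule R A} (h₁ : 1 ∈ M)
    (hx : ∀ y ∈ M, x * y ∈ M) : Subalgebra.toSubmodule (Algebra.adjoin R {x}) ≤ M := by
  rw [Algebra.adjoin_eq_span, Submodule.span_le]
  suffices ∀ k : ℕ, x ^ k ∈ M from fun y hy ↦ by
    obtain ⟨k, rfl⟩ := Submonoid.mem_closure_singleton.1 hy
    exact this k
  intro k
  induction k with
  | zero => simpa using h₁
  | succ k ih => exact pow_succ' x k ▸ hx _ ih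

theorem adjoin_coe_eq_top {F L : Type*} [Field F] [Field L] [Algebra F L] {x : L}
    (hx : IsIntegral F x) {ξ : F⟮x⟯} (hξ : (ξ : L) = x) : Algebra.adjoin F {ξ} = ⊤ := by
  obtain rfl : ξ = IntermediateField.AdjoinSimple.gen F x := Subtype.ext hξ
  simpa using (IntermediateField.adjoin.powerBasis hx).adjoin_gen_eq_top

-- Here `ℚ⟮x⟯` carries the `ℚ`-algebra structure coming from characteristic zero, not the one
-- of an intermediate field.
theorem adjoin_rat_coe_eq_top {L : Type*} [Field L] [Algebra ℚ L] {x : L} (hx : IsIntegral ℚ x)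
    {ξ : ℚ⟮x⟯} (hξ : (ξ : L) = x) : Algebra.adjoin ℚ {ξ} = ⊤ :=
  Subsingleton.elim ℚ⟮x⟯.algebra' DivisionRing.toRatAlgebra ▸ adjoin_coe_eq_top hx hξ

end Adjoin

section RootOfChebyshevC

variable {R A : Type*} [CommRing R] [CommRing A] [Algebra R A] {η : A} {n : ℕ}
  (hη : (Chebyshev.C A n).eval η = 0)

include hη

theorem dirichletPoly_eval_reflect (m : ℤ) :
    (dirichletPoly A (2 * n - 1 - m)).eval η = (dirichletPoly A m).eval η := by
  have h := congrArg (eval η) (chebyshevC_mul_dirichletPoly A n (n - 1 - m))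
  rw [eval_mul, hη, zero_mul, eval_add, show (n : ℤ) - 1 - m - n = -1 - m by ring,
    dirichletPoly_neg_one_sub, eval_neg, ← sub_eq_add_neg, eq_comm, sub_eq_zero] at h
  rw [← h]
  ring_nf

theorem dirichletPoly_eval_add_two_mul (m : ℤ) :
    (dirichletPoly A (m + 2 * n)).eval η = -(dirichletPoly A m).eval η := by
  rw [← dirichletPoly_eval_reflect hη, ← eval_neg, ← dirichletPoly_neg_one_sub]
  ring_nf

theorem span_dirichletPoly_eval_eq_adjoin (hn : n ≠ 0) :
    Submodule.span R (Set.range fun i : Fin n ↦ (dirichletPoly A (i : ℕ)).eval η) =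
      Subalgebra.toSubmodule (Algebra.adjoin R {η}) := by
  set M := Submodule.span R (Set.range fun i : Fin n ↦ (dirichletPoly A (i : ℕ)).eval η)
  have hmem (i : ℕ) (hi : i < n) : (dirichletPoly A i).eval η ∈ M :=
    Submodule.subset_span ⟨⟨i, hi⟩, rfl⟩
  have hpred (i : ℕ) (hi : i < n) : (dirichletPoly A (i - 1)).eval η ∈ M := by
    obtain _ | i := i
    · have h := dirichletPoly_neg_one_sub A 0
      simp only [sub_zero] at h
      simpa [h] using hmem 0 hi
    · simpa using hmem i (by omega)
  have hsucc (i : ℕ) (hi : i < n) : (dirichletPoly A (i + 1)).eval η ∈ M := by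
    obtain hi' | rfl : i + 1 < n ∨ n = i + 1 := by omega
    · exact_mod_cast hmem (i + 1) hi'
    · rw [← dirichletPoly_eval_reflect hη]
      convert hmem i hi using 3
      push_cast
      ring
  apply le_antisymm
  · refine Submodule.span_le.2 ?_
    rintro _ ⟨i, rfl⟩
    change eval η _ ∈ Algebra.adjoin R {η}
    have h := aeval_mem_adjoin_singleton R (p := dirichletPoly R i) η
    rwa [aeval_def, ← eval_map, map_dirichletPoly] at h
  · have h₁ : 1 ∈ M := by simpa [dirichletPoly_zero] using hmem 0 (Nat.pos_of_ne_zero hn)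
    refine adjoin_singleton_toSubmodule_le h₁ fun y hy ↦ ?_
    suffices M ≤ M.comap (LinearMap.mulLeft R η) from this hy
    refine Submodule.span_le.2 ?_
    rintro _ ⟨i, rfl⟩
    have h := congrArg (eval η) (chebyshevC_mul_dirichletPoly A 1 i)
    rw [Chebyshev.C_one, eval_mul, eval_X, eval_add] at h
    change η * _ ∈ M
    exact h ▸ add_mem (hsucc i i.isLt) (hpred i i.isLt)

-- `D_{i+j}(η)` is up to sign a basis vector. For `j ≠ 0` it can be the `i`-th one only through the
-- reflection `m ↦ 2n - 1 - m`, with sign `+`, or through `m ↦ -1 - m`, with sign `-`.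
theorem repr_dirichletPoly_eval_add (b : Module.Basis (Fin n) R A)
    (hb : ∀ i : Fin n, b i = (dirichletPoly A (i : ℕ)).eval η) (i : Fin n) {j : ℤ}
    (hj₀ : j ≠ 0) (hj : |j| < 2 * n) :
    b.repr ((dirichletPoly A (i + j)).eval η) i =
      (if 2 * n - (2 * i + 1) = j then 1 else 0) - (if 2 * i + 1 = -j then 1 else 0) := by
  have hrepr (k : ℤ) (hk : 0 ≤ k) (hk' : k < n) :
      b.repr ((dirichletPoly A k).eval η) i = if k = i then 1 else 0 := by
    lift k to ℕ using hk
    rw [← hb ⟨k, by omega⟩, b.repr_self, Finsupp.single_apply]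
    simp [Fin.ext_iff]
  have hneg (k : ℤ) := congrArg (b.repr · i) (dirichletPoly_eval_add_two_mul hη k)
  have hrefl (k : ℤ) := congrArg (b.repr · i) (dirichletPoly_eval_reflect hη k)
  simp only [map_neg, Finsupp.neg_apply] at hneg hrefl
  have hi := i.isLt
  rw [abs_lt] at hj
  obtain h | h | h | h | h : i + j < -n ∨ (-n ≤ i + j ∧ i + j < 0) ∨ (0 ≤ i + j ∧ i + j < n) ∨
      (n ≤ i + j ∧ i + j < 2 * n) ∨ 2 * n ≤ i + j := by omega
  · rw [← neg_neg (b.repr _ i), ← hneg, hrepr _ (by omega) (by omega)]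
    split_ifs <;> first | omega | simp
  · rw [← neg_neg (b.repr _ i), ← hneg, ← hrefl, hrepr _ (by omega) (by omega)]
    split_ifs <;> first | omega | simp
  · rw [hrepr _ (by omega) (by omega)]
    split_ifs <;> first | omega | simp
  · rw [← hrefl, hrepr _ (by omega) (by omega)]
    split_ifs <;> first | omega | simp
  · rw [← sub_add_cancel (i + j) (2 * n), hneg, hrepr _ (by omega) (by omega)]
    split_ifs <;> first | omega | simp

theorem trace_chebyshevC_eval_eq_zero (b : Module.Basis (Fin n) R A)
    (hb : ∀ i : Fin n, b i = (dirichletPoly A (i : ℕ)).eval η) {j : ℤ} (hj₀ : j ≠ 0)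
    (hj : |j| < 2 * n) : Algebra.trace R A ((Chebyshev.C A j).eval η) = 0 := by
  have hdiag (i : Fin n) : Algebra.leftMulMatrix b ((Chebyshev.C A j).eval η) i i =
      ((if 2 * n - (2 * i + 1) = j then 1 else 0) + (if 2 * n - (2 * i + 1) = -j then 1 else 0))
      - ((if (2 * i + 1 : ℤ) = j then 1 else 0) + (if (2 * i + 1 : ℤ) = -j then 1 else 0)) := by
    rw [Algebra.leftMulMatrix_eq_repr_mul, hb, ← eval_mul, chebyshevC_mul_dirichletPoly, eval_add,
      map_add, Finsupp.add_apply, repr_dirichletPoly_eval_add hη b hb i hj₀ hj,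
      sub_eq_add_neg (i : ℤ) j,
      repr_dirichletPoly_eval_add hη b hb i (neg_ne_zero.2 hj₀) (by rwa [abs_neg]), neg_neg]
    ring
  rw [Algebra.trace_eq_matrix_trace b, Matrix.trace]
  simp only [Matrix.diag_apply, hdiag, Finset.sum_sub_distrib]
  rw [sub_eq_zero, ← Equiv.sum_comp Fin.revPerm]
  refine Finset.sum_congr rfl fun i _ ↦ ?_
  have hi : (2 * n - (2 * (Fin.revPerm i : ℕ) + 1) : ℤ) = 2 * i + 1 := by
    rw [Fin.revPerm_apply, Fin.val_rev]
    omega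
  rw [hi]

theorem trace_two_sub_mul_dirichletPoly_eval_mul (b : Module.Basis (Fin n) R A)
    (hb : ∀ i : Fin n, b i = (dirichletPoly A (i : ℕ)).eval η) (k l : Fin n) :
    Algebra.trace R A ((2 - η) * (dirichletPoly A (k : ℕ)).eval η *
      (dirichletPoly A (l : ℕ)).eval η) = if k = l then 2 * (n : R) else 0 := by
  have hprod := congrArg (eval η) (two_sub_X_mul_dirichletPoly_mul_dirichletPoly A k l)
  simp only [eval_mul, eval_sub, eval_ofNat, eval_X] at hprod
  have hsum : Algebra.trace R A ((Chebyshev.C A (k + l + 1)).eval η) = 0 :=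
    trace_chebyshevC_eval_eq_zero hη b hb (by omega) (by rw [abs_lt]; omega)
  rw [hprod, map_sub, hsum, sub_zero]
  obtain rfl | hkl := eq_or_ne k l
  · have htwo := Algebra.trace_algebraMap_of_basis b (2 : R)
    rw [map_ofNat, Fintype.card_fin, nsmul_eq_mul] at htwo
    simpa [mul_comm] using htwo
  · rw [if_neg hkl]
    exact trace_chebyshevC_eval_eq_zero hη b hb (by omega) (by rw [abs_lt]; omega)

end RootOfChebyshevC

section DirichletBasis

variable {F A : Type*} [Field F] [CommRing A] [Nontrivial A] [Algebra F A] {η : A} {n : ℕ}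
  (hirr : Irreducible (Chebyshev.C F n)) (hη : (Chebyshev.C A n).eval η = 0)
  (htop : Algebra.adjoin F {η} = ⊤)

include hirr in
theorem ne_zero_of_irreducible_chebyshevC : n ≠ 0 := by
  rintro rfl
  exact not_irreducible_C (2 : F) (by simpa [C_ofNat] using hirr)

include hirr hη htop in
theorem finrank_eq_of_irreducible_chebyshevC : Module.finrank F A = n := by
  have hmonic := monic_chebyshevC F (ne_zero_of_irreducible_chebyshevC hirr)
  have hroot : aeval η (Chebyshev.C F n) = 0 := by rwa [Chebyshev.aeval_C]
  have hint : IsIntegral F η := ⟨_, hmonic, by rwa [← aeval_def]⟩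
  rw [(PowerBasis.ofAdjoinEqTop hint htop).finrank, PowerBasis.ofAdjoinEqTop_dim,
    ← minpoly.eq_of_irreducible_of_monic hirr hroot hmonic, natDegree_chebyshevC]

/-- The values `D_0(η), …, D_{n-1}(η)` of the Dirichlet polynomials at a root `η` of an irreducible
`C_n`, as a basis of the field `F[η]`. The assumption `htop` says that `A` is `F[η]`. -/
noncomputable def dirichletBasis : Module.Basis (Fin n) F A :=
  basisOfTopLeSpanOfCardEqFinrank (fun i : Fin n ↦ (dirichletPoly A (i : ℕ)).eval η)
    (by rw [span_dirichletPoly_eval_eq_adjoin hη (ne_zero_of_irreducible_chebyshevC hirr), htop,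
      Algebra.top_toSubmodule])
    (by rw [Fintype.card_fin, finrank_eq_of_irreducible_chebyshevC hirr hη htop])

theorem dirichletBasis_apply (i : Fin n) :
    dirichletBasis hirr hη htop i = (dirichletPoly A (i : ℕ)).eval η :=
  congrFun (coe_basisOfTopLeSpanOfCardEqFinrank _ _ _) i

include hirr hη htop in
theorem linearIndependent_int_dirichletPoly_eval [CharZero F] :
    LinearIndependent ℤ fun i : Fin n ↦ (dirichletPoly A (i : ℕ)).eval η := by
  rw [← funext (dirichletBasis_apply hirr hη htop)]
  exact (Module.Basis.linearIndependent _).restrict_scalars' ℤ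

end DirichletBasis

section Embedding

variable {K L : Type*} [Field K] [Field L] (f : K →+* L) {ζ : L} {η : K}

theorem map_chebyshevC_eval (hζ : ζ ≠ 0) (hη : f η = ζ + ζ⁻¹) (m : ℕ) :
    f ((Chebyshev.C K m).eval η) = ζ ^ m + ζ⁻¹ ^ m := by
  rw [← chebyshevC_eval_add_of_mul_eq_one (mul_inv_cancel₀ hζ), ← hη, ← Chebyshev.map_C f,
    eval_map_apply]

theorem chebyshevC_eval_eq_zero_of_pow_eq_neg_one (hζ : ζ ≠ 0) (hη : f η = ζ + ζ⁻¹) {n : ℕ}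
    (hpow : ζ ^ (2 * n) = -1) : (Chebyshev.C K n).eval η = 0 := by
  have hinv : ζ⁻¹ ^ n = -ζ ^ n := by
    rw [inv_pow, inv_eq_iff_eq_inv, eq_comm]
    exact inv_eq_of_mul_eq_one_left (by rw [mul_neg, ← pow_add, ← two_mul, hpow, neg_neg])
  exact f.injective (by rw [map_chebyshevC_eval f hζ hη, hinv, add_neg_cancel, map_zero])

theorem chebyshevC_eval_neg_eq_zero_of_isPrimitiveRoot {n : ℕ} (hn : n ≠ 0)
    (hζ : IsPrimitiveRoot ζ (2 * n * 2)) {ξ : K} (hξ : f ξ = ζ + ζ⁻¹) :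
    (Chebyshev.C K n).eval (-ξ) = 0 := by
  have hζ₀ : ζ ≠ 0 := hζ.ne_zero (by positivity)
  have hpow : ζ ^ (2 * n) = -1 := (hζ.pow (by positivity) rfl).eq_neg_one_of_two_right
  refine chebyshevC_eval_eq_zero_of_pow_eq_neg_one f (neg_ne_zero.2 hζ₀) ?_ ?_
  · rw [map_neg, hξ, inv_neg, neg_add]
  · rw [(even_two_mul n).neg_pow, hpow]

theorem sum_eq_dirichletPoly_eval (hζ : ζ ≠ 0) (hη : f η = ζ + ζ⁻¹) {e : ℕ → K} (he₀ : e 0 = 1)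
    (he : ∀ j, 1 ≤ j → f (e j) = ζ ^ j + ζ⁻¹ ^ j) (m : ℕ) :
    ∑ j ∈ Finset.range (m + 1), e j = (dirichletPoly K m).eval η := by
  induction m with
  | zero => simp [he₀, dirichletPoly_zero]
  | succ m ih =>
    have h : e (m + 1) = (Chebyshev.C K (m + 1 : ℕ)).eval η :=
      f.injective (by rw [he _ (by omega), map_chebyshevC_eval f hζ hη])
    rw [Finset.sum_range_succ, ih, h, dirichletPoly_eq_add_chebyshevC K (m + 1 : ℕ), eval_add]
    simp

theorem sum_neg_one_pow_mul_eq_dirichletPoly_eval (hζ : ζ ≠ 0) {ξ : K} (hξ : f ξ = ζ + ζ⁻¹)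
    {e : ℕ → K} (he₀ : e 0 = 1) (he : ∀ j, 1 ≤ j → f (e j) = ζ ^ j + ζ⁻¹ ^ j) (m : ℕ) :
    ∑ j ∈ Finset.range (m + 1), (-1) ^ j * e j = (dirichletPoly K m).eval (-ξ) := by
  refine sum_eq_dirichletPoly_eval f (neg_ne_zero.2 hζ) ?_ ?_ (fun j hj ↦ ?_) m
  · rw [map_neg, hξ, inv_neg, neg_add]
  · rw [pow_zero, one_mul, he₀]
  · rw [map_mul, map_pow, map_neg, map_one, he j hj, inv_neg, neg_pow ζ, neg_pow ζ⁻¹, mul_add]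

end Embedding

theorem rotated_Zn_two_power_general {L : Type*} [Field L] [Algebra ℚ L]
    (r n : ℕ) (hr : 2 ≤ r) (hn : n = 2 ^ (r - 2))
    (ζ : L) (hζ : IsPrimitiveRoot ζ (2 ^ r))
    (ξ : ℚ⟮ζ + ζ⁻¹⟯) (hξ : (ξ : L) = ζ + ζ⁻¹)
    (e : ℕ → ℚ⟮ζ + ζ⁻¹⟯) (he0 : e 0 = 1)
    (he : ∀ i : ℕ, 1 ≤ i → ((e i : L) = ζ ^ i + ζ⁻¹ ^ i))
    (α' : ℚ⟮ζ + ζ⁻¹⟯) (hα' : α' = 2 + e 1)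
    (g : Fin n → ℚ⟮ζ + ζ⁻¹⟯)
    (hg : ∀ k : Fin n, g k =
      ∑ j ∈ Finset.range (n - (k : ℕ)), (-1 : ℚ⟮ζ + ζ⁻¹⟯) ^ j * e j) :
    LinearIndependent ℤ g ∧
    Submodule.span ℤ (Set.range g) =
      Subalgebra.toSubmodule (Algebra.adjoin ℤ ({ξ} : Set ℚ⟮ζ + ζ⁻¹⟯)) ∧
    ∀ k l : Fin n, Algebra.trace ℚ ℚ⟮ζ + ζ⁻¹⟯ (α' * g k * g l) =
      if k = l then 2 ^ (r - 1) else 0 := by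
  obtain ⟨s, rfl⟩ := Nat.exists_eq_add_of_le' hr
  obtain rfl : n = 2 ^ s := hn
  have hζ₀ : ζ ≠ 0 := hζ.ne_zero (by positivity)
  have hint : IsIntegral ℚ (ζ + ζ⁻¹) :=
    ((hζ.isIntegral (by positivity)).add (hζ.inv.isIntegral (by positivity))).tower_top
  have htop : Algebra.adjoin ℚ {-ξ} = ⊤ := by
    rw [adjoin_singleton_neg, adjoin_rat_coe_eq_top hint hξ]
  have hroot : (Chebyshev.C ℚ⟮ζ + ζ⁻¹⟯ (2 ^ s : ℕ)).eval (-ξ) = 0 :=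
    chebyshevC_eval_neg_eq_zero_of_isPrimitiveRoot (algebraMap _ L) (by positivity)
      (by rwa [← pow_succ', ← pow_succ]) hξ
  obtain rfl : e 1 = ξ := Subtype.ext (by rw [he 1 le_rfl, hξ, pow_one, pow_one])
  obtain rfl : g = (fun i : Fin (2 ^ s) ↦ (dirichletPoly _ (i : ℕ)).eval (-e 1)) ∘ Fin.rev :=
    funext fun k ↦ by
      rw [hg, ← show (Fin.rev k : ℕ) + 1 = 2 ^ s - k by rw [Fin.val_rev]; omega]
      exact sum_neg_one_pow_mul_eq_dirichletPoly_eval (algebraMap _ L) hζ₀ hξ he0 he _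
  have hirr := irreducible_chebyshevC_two_pow s
  refine ⟨(linearIndependent_int_dirichletPoly_eval hirr hroot htop).comp _ Fin.rev_injective,
    ?_, fun k l ↦ ?_⟩
  · rw [Fin.rev_surjective.range_comp, span_dirichletPoly_eval_eq_adjoin hroot (by positivity),
      adjoin_singleton_neg]
  · simpa [hα', Fin.rev_inj, pow_succ'] using
      trace_two_sub_mul_dirichletPoly_eval_mul hroot (dirichletBasis hirr hroot htop)
        (dirichletBasis_apply hirr hroot htop) k.rev l.rev

/-- With `K = ℚ(ζ + ζ⁻¹)` for `ζ` a primitive `2^r`-th root of unity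
(`r ≥ 5`), `n = 2^{r-2}`, `α' = 2 + e₁` and `gₖ = Σ_{j=0}^{n-k} (-1)^j eⱼ`
(`1 ≤ k ≤ n`, `0`-indexed below), the family `g` is a `ℤ`-basis of
`O_K = ℤ[ζ + ζ⁻¹]` and `Tr(α' gₖ gₗ) = 2^{r-1}` if `k = l` and `0` otherwise:
the lattice `(1/√(2^{r-1}))·σ_{α'}(O_K)` is a rotated copy of `ℤⁿ`. -/
theorem rotated_Zn_two_power
    (r n : ℕ) (hr : 5 ≤ r) (hn : n = 2 ^ (r - 2))
    (ζ : ℂ) (hζ : IsPrimitiveRoot ζ (2 ^ r))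
    (ξ : ℚ⟮ζ + ζ⁻¹⟯) (hξ : (ξ : ℂ) = ζ + ζ⁻¹)
    (e : ℕ → ℚ⟮ζ + ζ⁻¹⟯) (he0 : e 0 = 1)
    (he : ∀ i : ℕ, 1 ≤ i → ((e i : ℂ) = ζ ^ i + ζ⁻¹ ^ i))
    (α' : ℚ⟮ζ + ζ⁻¹⟯) (hα' : α' = 2 + e 1)
    (g : Fin n → ℚ⟮ζ + ζ⁻¹⟯)
    (hg : ∀ k : Fin n, g k =
      ∑ j ∈ Finset.range (n - (k : ℕ)), (-1 : ℚ⟮ζ + ζ⁻¹⟯) ^ j * e j) :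
    LinearIndependent ℤ g ∧
    Submodule.span ℤ (Set.range g) =
      Subalgebra.toSubmodule (Algebra.adjoin ℤ ({ξ} : Set ℚ⟮ζ + ζ⁻¹⟯)) ∧
    ∀ k l : Fin n, Algebra.trace ℚ ℚ⟮ζ + ζ⁻¹⟯ (α' * g k * g l) =
      if k = l then 2 ^ (r - 1) else 0 :=
  rotated_Zn_two_power_general r n (by omega) hn ζ hζ ξ hξ e he0 he α' hα' g hg
end

section
/- Let p ≥ 7 be a prime, n = (p-1)/2, ζ a primitive p-th root of unity in ℂ, K = ℚ(ζ + ζ^{-1}), e_j = ζ^j + ζ^{-j}, and α = 2 - e_1. Define w_1 = -e_1 - 2e_2 - 2e_3 - ⋯ - 2e_n and w_k = e_{k-1} for 2 ≤ k ≤ n. Then for all 1 ≤ i, j ≤ n, Tr_{K/ℚ}(α w_i w_j) / p = (B Bᵀ)_{ij}, the Gram matrix of the standard basis of D_n. Hence the lattice (1/√p)·σ_α(I), where I is the ℤ-span of w_1, …, w_n, is a full-diversity rotated (isometric) copy of D_n in ℝ^n. -/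
open scoped IntermediateField
open Matrix

/-!
Put `f_j = e_{j+1} + ⋯ + e_n` for `0 ≤ j < n`. Since `ζ ^ (2n+1) = 1`, multiplication by `1 - ζ`
makes this sum telescope to `ζ ^ (j+1) - ζ ^ (-j)`. As `α = (1 - ζ)(1 - ζ⁻¹)`, it follows that
`α f_i f_j = e_{i-j} - e_{i+j+1}` with `e_{-m} = e_m` and `e_0 = 2`. Now `Tr(e_m)` is `p - 1` or
`-1` according to whether `p` divides `m`, so `Tr(α f_i f_j) = p δ_{ij}`. Finally
`w_1 = -f_0 - f_1` and `w_k = f_{k-2} - f_{k-1}`, that is, `w = B f`, so the Gram matrix of `w` is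
`p B Bᵀ`.
-/

/-- The tail sum `e_{j+1} + ⋯ + e_n`. Applied to `e_k = ζ ^ k + ζ⁻¹ ^ k`, these sums for `0 ≤ j < n`
are the `f_j`, which are orthogonal for `Tr(αxy)`. -/
def tailSum {M : Type*} [AddCommMonoid M] (e : ℕ → M) (n j : ℕ) : M :=
  ∑ k ∈ Finset.Ioc j n, e k

/-- The form `(x, y) ↦ Tr(αxy)`. For `K` totally real over `k = ℚ` and `α` totally positive it is the
inner product of the images of `x` and `y` under the twisted embedding `σ_α`. -/
noncomputable def twistedTraceForm (k : Type*) {K : Type*} [CommRing k] [CommRing K] [Algebra k K]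
    (α : K) : LinearMap.BilinForm k K :=
  (Algebra.traceForm k K).compLeft (LinearMap.mulLeft k α)

theorem twistedTraceForm_apply {k K : Type*} [CommRing k] [CommRing K] [Algebra k K]
    (α x y : K) : twistedTraceForm k α x y = Algebra.trace k K (α * x * y) :=
  rfl

section Gram

theorem bilinForm_sum_smul_sum_smul_of_orthogonal {R M ι κ : Type*} [CommRing R] [AddCommGroup M]
    [Module R M] [Fintype ι] [DecidableEq ι] (β : LinearMap.BilinForm R M) {f : ι → M} {c : R}
    (hf : ∀ a b, β (f a) (f b) = if a = b then c else 0) (B : Matrix κ ι ℤ) (i j : κ) :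
    β (∑ a, B i a • f a) (∑ b, B j b • f b) = c * ((B * Bᵀ) i j : ℤ) := by
  simp only [map_sum, map_zsmul, LinearMap.sum_apply, LinearMap.smul_apply, hf, smul_ite,
    smul_zero, Finset.sum_ite_eq', Finset.mem_univ, if_true, Matrix.mul_apply,
    Matrix.transpose_apply, Int.cast_sum, Int.cast_mul, Finset.mul_sum, zsmul_eq_mul]
  exact Finset.sum_congr rfl fun a _ => by ring

variable {M : Type*} [AddCommGroup M]

theorem tailSum_sub_tailSum (e : ℕ → M) {n j : ℕ} (hj : j < n) :
    tailSum e n j - tailSum e n (j + 1) = e (j + 1) := by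
  rw [tailSum, tailSum, ← Finset.sum_Ioc_consecutive e j.le_succ hj, Nat.Ioc_succ_singleton,
    Finset.sum_singleton, Nat.succ_eq_add_one, add_sub_cancel_right]

theorem sum_DnBasisMatrix_smul_of_val_ne_zero (f : ℕ → M) {n : ℕ} {i : Fin n}
    (hi : (i : ℕ) ≠ 0) : ∑ j, DnBasisMatrix n i j • f j = f (i - 1) - f i := by
  have hrow (j : Fin n) : DnBasisMatrix n i j • f j =
      (if (j : ℕ) = i - 1 then f j else 0) - (if (j : ℕ) = i then f j else 0) := by
    simp only [DnBasisMatrix, Matrix.of_apply, Fin.ext_iff]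
    split_ifs <;> first | omega | simp
  simp_rw [hrow]
  rw [Fin.sum_univ_eq_sum_range
    (fun j => (if j = i - 1 then f j else 0) - (if j = i then f j else 0)), Finset.sum_sub_distrib,
    Finset.sum_ite_eq', Finset.sum_ite_eq', if_pos (Finset.mem_range.2 (by omega)),
    if_pos (Finset.mem_range.2 i.2)]

theorem sum_DnBasisMatrix_zero_smul_tailSum (e : ℕ → M) {n : ℕ} (hn : 0 < n) :
    ∑ j, DnBasisMatrix n ⟨0, hn⟩ j • tailSum e n j = -tailSum e n 0 - tailSum e n 1 := by
  match n with
  | 1 => simp [DnBasisMatrix, tailSum]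
  | m + 2 => simp [DnBasisMatrix, Fin.sum_univ_succ, sub_eq_add_neg]

theorem eq_sum_DnBasisMatrix_smul_tailSum {R : Type*} [CommRing R] {n : ℕ} {e : ℕ → R}
    {w : Fin n → R} (hw0 : ∀ h0 : 0 < n, w ⟨0, h0⟩ = -e 1 - ∑ j ∈ Finset.Icc 2 n, 2 * e j)
    (hwk : ∀ k : Fin n, 1 ≤ (k : ℕ) → w k = e k) (i : Fin n) :
    w i = ∑ j, DnBasisMatrix n i j • tailSum e n j := by
  obtain ⟨_ | i, hi⟩ := i
  · rw [hw0, sum_DnBasisMatrix_zero_smul_tailSum,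
      sub_eq_iff_eq_add.1 (tailSum_sub_tailSum e hi), ← Finset.mul_sum, tailSum]
    change _ - 2 * ∑ j ∈ Finset.Ioc 1 n, e j = _
    ring
  · rw [hwk _ (by simp), sum_DnBasisMatrix_smul_of_val_ne_zero (tailSum e n) (by simp)]
    exact (tailSum_sub_tailSum e (by omega)).symm

end Gram

section QuadraticTrace

open Polynomial (X C aeval)
open IntermediateField.AdjoinSimple (gen)

theorem add_inv_mul_zpow {F : Type*} [Field F] {z : F} (hz : z ≠ 0) (m : ℤ) :
    (z + z⁻¹) * z ^ m = z ^ (m + 1) + z ^ (m - 1) := by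
  rw [zpow_add_one₀ hz, zpow_sub_one₀ hz]
  ring

theorem eq_of_mul_eq_add_one_add_sub_one {R : Type*} [CommRing R] {u v : ℤ → R} {a : R}
    (hu : ∀ m, a * u m = u (m + 1) + u (m - 1)) (hv : ∀ m, a * v m = v (m + 1) + v (m - 1))
    (h0 : u 0 = v 0) (h1 : u 1 = v 1) (m : ℤ) : u m = v m := by
  suffices u m = v m ∧ u (m + 1) = v (m + 1) from this.1
  induction m using Int.induction_on with
  | zero => exact ⟨h0, h1⟩
  | succ m ih =>
    have hu' := hu (m + 1)
    have hv' := hv (m + 1)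
    rw [add_sub_cancel_right] at hu' hv'
    exact ⟨ih.2, by linear_combination hv' - hu' + a * ih.2 - ih.1⟩
  | pred m ih =>
    rw [sub_add_cancel]
    exact ⟨by linear_combination hv (-m) - hu (-m) + a * ih.1 - ih.2, ih.1⟩

variable {K F : Type*} [Field K] [Field F] [Algebra K F] {z : F} {t : K}

theorem natDegree_X_sq_sub_C_mul_X_add_one (t : K) : (X ^ 2 - C t * X + 1).natDegree = 2 := by
  compute_degree!

theorem minpoly_eq_of_algebraMap_eq_add_inv (ht : algebraMap K F t = z + z⁻¹)
    (hz : z ∉ (algebraMap K F).range) : minpoly K z = X ^ 2 - C t * X + 1 := by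
  have hz0 : z ≠ 0 := by rintro rfl; exact hz (zero_mem _)
  have hmonic : (X ^ 2 - C t * X + 1).Monic := by monicity!
  have hroot : aeval z (X ^ 2 - C t * X + 1) = 0 := by
    simp only [map_add, map_sub, map_mul, map_pow, map_one, Polynomial.aeval_X,
      Polynomial.aeval_C, ht]
    field_simp
    ring
  have hint : IsIntegral K z := ⟨_, hmonic, hroot⟩
  refine (Polynomial.eq_of_monic_of_dvd_of_natDegree_le (minpoly.monic hint) hmonic
    (minpoly.dvd K z hroot) ?_).symm
  rw [natDegree_X_sq_sub_C_mul_X_add_one]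
  exact (minpoly.two_le_natDegree_iff hint).2 hz

theorem algebraMap_trace_gen_zpow (ht : algebraMap K F t = z + z⁻¹)
    (hz : z ∉ (algebraMap K F).range) (m : ℤ) :
    algebraMap K F (Algebra.trace K K⟮z⟯ (gen K z ^ m)) = z ^ m + z⁻¹ ^ m := by
  have hz0 : z ≠ 0 := by rintro rfl; exact hz (zero_mem _)
  have hg0 : gen K z ≠ 0 := fun h => hz0 (congrArg Subtype.val h)
  have hmin := minpoly_eq_of_algebraMap_eq_add_inv ht hz
  have hdeg := natDegree_X_sq_sub_C_mul_X_add_one t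
  have hint : IsIntegral K z := minpoly.ne_zero_iff.1 fun h => by simp [← hmin, h] at hdeg
  have htrace_one : Algebra.trace K K⟮z⟯ 1 = 2 := by
    rw [← map_one (algebraMap K K⟮z⟯), Algebra.trace_algebraMap,
      IntermediateField.adjoin.finrank hint, hmin, hdeg, nsmul_one, Nat.cast_ofNat]
  have htrace_gen : Algebra.trace K K⟮z⟯ (gen K z) = t := by
    rw [trace_adjoinSimpleGen hint, hmin, Polynomial.nextCoeff_of_natDegree_pos (by simp [hdeg]),
      hdeg]
    simp [Polynomial.coeff_one, Polynomial.coeff_X_pow]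
  have ht_gen : algebraMap K K⟮z⟯ t = gen K z + (gen K z)⁻¹ := Subtype.ext ht
  refine eq_of_mul_eq_add_one_add_sub_one (a := z + z⁻¹)
    (u := fun m => algebraMap K F (Algebra.trace K K⟮z⟯ (gen K z ^ m)))
    (v := fun m => z ^ m + z⁻¹ ^ m) (fun m => ?_) (fun m => ?_) ?_ ?_ m
  · rw [← ht, ← map_mul, ← smul_eq_mul, ← map_smul, Algebra.smul_def, ht_gen,
      add_inv_mul_zpow hg0, map_add, map_add]
  · have hinv := add_inv_mul_zpow (inv_ne_zero hz0) m
    rw [inv_inv, add_comm z⁻¹] at hinv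
    rw [mul_add, add_inv_mul_zpow hz0, hinv]
    ring
  · simp [htrace_one, one_add_one_eq_two, map_ofNat]
  · simp [htrace_gen, ht]

end QuadraticTrace

section Cyclotomic

open Polynomial (cyclotomic)
open IntermediateField.AdjoinSimple (gen)

variable {k L : Type*} [Field k] [Field L] [Algebra k L] {p : ℕ} {ζ : L}

theorem trace_eq_neg_one_of_isPrimitiveRoot_prime [IsCyclotomicExtension {p} k L] (hp : p.Prime)
    (hirr : Irreducible (cyclotomic p k)) (hζ : IsPrimitiveRoot ζ p) :
    Algebra.trace k L ζ = -1 := by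
  have : Fact p.Prime := ⟨hp⟩
  have := hζ.neZero'
  have : NeZero (p : k) := .nat_of_neZero (algebraMap k L)
  have hdeg : (cyclotomic p k).natDegree = p - 1 := by
    rw [Polynomial.natDegree_cyclotomic, Nat.totient_prime hp]
  have hp2 := hp.two_le
  rw [← hζ.powerBasis_gen k, PowerBasis.trace_gen_eq_nextCoeff_minpoly, hζ.powerBasis_gen k,
    ← hζ.minpoly_eq_cyclotomic_of_irreducible hirr,
    Polynomial.nextCoeff_of_natDegree_pos (by omega), hdeg, Polynomial.cyclotomic_prime,
    Polynomial.finsetSum_coeff]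
  simp only [Polynomial.coeff_X_pow]
  rw [Finset.sum_ite_eq, if_pos (Finset.mem_range.2 (by omega))]

theorem trace_zpow_of_isPrimitiveRoot_prime [IsCyclotomicExtension {p} k L] (hp : p.Prime)
    (hirr : Irreducible (cyclotomic p k)) (hζ : IsPrimitiveRoot ζ p) (m : ℤ) :
    Algebra.trace k L (ζ ^ m) = (if (p : ℤ) ∣ m then (p : k) else 0) - 1 := by
  have : NeZero p := ⟨hp.ne_zero⟩
  have : Module.Finite k L := IsCyclotomicExtension.finiteDimensional {p} k L
  split_ifs with hm
  · rw [(hζ.zpow_eq_one_iff_dvd m).2 hm, ← map_one (algebraMap k L), Algebra.trace_algebraMap,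
      IsCyclotomicExtension.finrank L hirr, Nat.totient_prime hp, nsmul_one,
      Nat.cast_pred hp.pos]
  · have hgcd : m.gcd p = 1 := by
      rw [Int.gcd_comm, ← Int.isCoprime_iff_gcd_eq_one]
      exact (Nat.prime_iff_prime_int.1 hp).coprime_iff_not_dvd.2 hm
    rw [trace_eq_neg_one_of_isPrimitiveRoot_prime hp hirr (hζ.zpow_of_gcd_eq_one m hgcd), zero_sub]

end Cyclotomic

section RealSubfield

open Polynomial (cyclotomic)
open IntermediateField.AdjoinSimple (gen)

variable {k F : Type*} [Field k] [Field F] [Algebra k F] {z : F}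

variable (k z) in
theorem adjoin_add_inv_le_adjoin : k⟮z + z⁻¹⟯ ≤ k⟮z⟯ := by
  have hz := IntermediateField.mem_adjoin_simple_self k z
  exact IntermediateField.adjoin_simple_le_iff.2 (add_mem hz (inv_mem hz))

theorem notMem_adjoin_add_inv_of_isConjRoot (hint : IsIntegral k z) (hconj : IsConjRoot k z z⁻¹)
    (hne : z⁻¹ ≠ z) : z ∉ k⟮z + z⁻¹⟯ := by
  intro hmem
  obtain ⟨σ, hσ⟩ : ∃ σ : k⟮z⟯ →ₐ[k] F, σ (gen k z) = z⁻¹ :=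
    ⟨_, IntermediateField.algHomAdjoinIntegralEquiv_symm_apply_gen k hint
      ⟨z⁻¹, (isConjRoot_iff_mem_minpoly_aroots hint).1 hconj⟩⟩
  have hfix : σ.comp (IntermediateField.inclusion (adjoin_add_inv_le_adjoin k z)) =
      k⟮z + z⁻¹⟯.val := by
    refine IntermediateField.algHom_ext_of_eq_adjoin _ rfl ?_
    rintro _ rfl
    change σ (gen k z + (gen k z)⁻¹) = z + z⁻¹
    rw [map_add, map_inv₀, hσ, inv_inv, add_comm]
  exact hne (hσ.symm.trans (DFunLike.congr_fun hfix ⟨z, hmem⟩))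

variable {p : ℕ}

theorem isCyclotomicExtension_adjoin_of_le_adjoin [NeZero p] (hz : IsPrimitiveRoot z p)
    {K : IntermediateField k F} (hK : K ≤ k⟮z⟯) : IsCyclotomicExtension {p} k K⟮z⟯ := by
  have hadjoin : K⟮z⟯.restrictScalars k = k⟮z⟯ :=
    (IntermediateField.restrictScalars_adjoin_eq_sup k K _).trans (sup_eq_right.2 hK)
  exact (IntermediateField.isCyclotomicExtension_singleton_iff_eq_adjoin p k F _ hz).2 hadjoin

theorem notMem_adjoin_add_inv_of_isPrimitiveRoot (hp : 2 < p) (hirr : Irreducible (cyclotomic p k))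
    (hz : IsPrimitiveRoot z p) : z ∉ k⟮z + z⁻¹⟯ := by
  have : NeZero p := ⟨by omega⟩
  have := hz.neZero'
  have : NeZero (p : k) := .nat_of_neZero (algebraMap k F)
  refine notMem_adjoin_add_inv_of_isConjRoot (hz.isIntegral (by omega)).tower_top ?_ fun hinv => ?_
  · rw [isConjRoot_def, ← hz.minpoly_eq_cyclotomic_of_irreducible hirr,
      ← hz.inv.minpoly_eq_cyclotomic_of_irreducible hirr]
  · have hsq : z ^ 2 = 1 := by
      rw [sq]; nth_rewrite 1 [← hinv]; exact inv_mul_cancel₀ (hz.ne_zero (by omega))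
    exact hz.pow_ne_one_of_pos_of_lt two_ne_zero hp hsq

theorem trace_trace_gen_zpow_of_le_adjoin (hp : p.Prime) (hirr : Irreducible (cyclotomic p k))
    (hz : IsPrimitiveRoot z p) {K : IntermediateField k F} (hK : K ≤ k⟮z⟯) (m : ℤ) :
    Algebra.trace k K (Algebra.trace K K⟮z⟯ (gen K z ^ m)) =
      (if (p : ℤ) ∣ m then (p : k) else 0) - 1 := by
  have : NeZero p := ⟨hp.ne_zero⟩
  have := isCyclotomicExtension_adjoin_of_le_adjoin hz hK
  have : Module.Finite k K⟮z⟯ := IsCyclotomicExtension.finiteDimensional {p} k K⟮z⟯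
  have : Module.Finite k K := .left k K K⟮z⟯
  have : Module.Finite K K⟮z⟯ := .right k K K⟮z⟯
  have : Module.Free K K⟮z⟯ := .of_divisionRing K K⟮z⟯
  have hgen : IsPrimitiveRoot (gen K z) p :=
    .of_map_of_injective (f := algebraMap K⟮z⟯ F) hz (algebraMap K⟮z⟯ F).injective
  rw [Algebra.trace_trace, trace_zpow_of_isPrimitiveRoot_prime hp hirr hgen]

theorem exists_coe_eq_zpow_add_inv_zpow_and_trace_eq (hp : p.Prime) (hp2 : 2 < p)
    (hirr : Irreducible (cyclotomic p k)) (hz : IsPrimitiveRoot z p) (m : ℤ) :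
    ∃ x : k⟮z + z⁻¹⟯, (x : F) = z ^ m + z⁻¹ ^ m ∧
      Algebra.trace k k⟮z + z⁻¹⟯ x = (if (p : ℤ) ∣ m then (p : k) else 0) - 1 := by
  have hz_range : z ∉ (algebraMap k⟮z + z⁻¹⟯ F).range := by
    rintro ⟨y, hy⟩
    have hmem : algebraMap k⟮z + z⁻¹⟯ F y ∈ k⟮z + z⁻¹⟯ := y.2
    rw [hy] at hmem
    exact notMem_adjoin_add_inv_of_isPrimitiveRoot hp2 hirr hz hmem
  exact ⟨Algebra.trace k⟮z + z⁻¹⟯ k⟮z + z⁻¹⟯⟮z⟯ (gen k⟮z + z⁻¹⟯ z ^ m),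
    algebraMap_trace_gen_zpow (IntermediateField.AdjoinSimple.algebraMap_gen k (z + z⁻¹))
      hz_range m,
    trace_trace_gen_zpow_of_le_adjoin hp hirr hz (adjoin_add_inv_le_adjoin k z) m⟩

end RealSubfield

section TailSum

variable {F : Type*} [Field F] {z : F} {n : ℕ}

theorem one_sub_mul_tailSum_pow_add_inv_pow (hz : z ^ (2 * n + 1) = 1) {j : ℕ} (hj : j ≤ n) :
    (1 - z) * tailSum (fun k => z ^ k + z⁻¹ ^ k) n j = z ^ (j + 1) - z⁻¹ ^ j := by
  have hz0 : z ≠ 0 := by rintro rfl; simp at hz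
  have hvanish : z ^ (n + 1) = z⁻¹ ^ n := by
    rw [inv_pow]
    refine eq_inv_of_mul_eq_one_left ?_
    rw [← pow_add, ← hz]
    congr 1; ring
  have htele (m : ℕ) (hm : j ≤ m) : (1 - z) * tailSum (fun k => z ^ k + z⁻¹ ^ k) m j =
      (z ^ (j + 1) - z⁻¹ ^ j) - (z ^ (m + 1) - z⁻¹ ^ m) := by
    induction m, hm using Nat.le_induction with
    | base => simp [tailSum]
    | succ m hm ih =>
      rw [tailSum, Finset.sum_Ioc_succ_top hm, mul_add, ← tailSum, ih]
      linear_combination -z⁻¹ ^ m * mul_inv_cancel₀ hz0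
  rw [htele n hj, hvanish, sub_self, sub_zero]

theorem two_sub_mul_tailSum_mul_tailSum (hz : z ^ (2 * n + 1) = 1) {i j : ℕ} (hi : i ≤ n)
    (hj : j ≤ n) :
    (2 - (z + z⁻¹)) * tailSum (fun k => z ^ k + z⁻¹ ^ k) n i *
        tailSum (fun k => z ^ k + z⁻¹ ^ k) n j =
      (z ^ (i - j : ℤ) + z⁻¹ ^ (i - j : ℤ)) - (z ^ (i + j + 1 : ℤ) + z⁻¹ ^ (i + j + 1 : ℤ)) := by
  have hz0 : z ≠ 0 := by rintro rfl; simp at hz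
  have hi' := one_sub_mul_tailSum_pow_add_inv_pow hz hi
  have hj' := one_sub_mul_tailSum_pow_add_inv_pow (z := z⁻¹) (by rw [inv_pow, hz, inv_one]) hj
  simp only [inv_inv, add_comm (z⁻¹ ^ _) (z ^ _)] at hj'
  calc _ = ((1 - z) * tailSum (fun k => z ^ k + z⁻¹ ^ k) n i) *
        ((1 - z⁻¹) * tailSum (fun k => z ^ k + z⁻¹ ^ k) n j) := by
        have : 2 - (z + z⁻¹) = (1 - z) * (1 - z⁻¹) := by
          linear_combination -mul_inv_cancel₀ hz0
        rw [this]; ring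
    _ = (z ^ (i + 1) - z⁻¹ ^ i) * (z⁻¹ ^ (j + 1) - z ^ j) := by rw [hi', hj']
    _ = _ := by
        simp only [inv_pow, _root_.inv_zpow, zpow_sub₀ hz0, zpow_add₀ hz0, zpow_natCast, zpow_one]
        field_simp
        ring

end TailSum

section RotatedLattice

open Polynomial (cyclotomic)

variable {k F : Type*} [Field k] [Field F] [Algebra k F] {p n : ℕ} {ζ : F}

theorem twistedTraceForm_tailSum_tailSum (hp : p.Prime) (hn : p = 2 * n + 1)
    (hirr : Irreducible (cyclotomic p k)) (hζ : IsPrimitiveRoot ζ p) {e : ℕ → k⟮ζ + ζ⁻¹⟯}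
    (he : ∀ j : ℕ, 1 ≤ j → (e j : F) = ζ ^ j + ζ⁻¹ ^ j) (i j : Fin n) :
    twistedTraceForm k (2 - e 1) (tailSum e n i) (tailSum e n j) =
      if i = j then (p : k) else 0 := by
  have hp2 : 2 < p := by have := hp.two_le; omega
  obtain ⟨x, hx, hx_trace⟩ :=
    exists_coe_eq_zpow_add_inv_zpow_and_trace_eq hp hp2 hirr hζ ((i : ℤ) - j)
  obtain ⟨y, hy, hy_trace⟩ :=
    exists_coe_eq_zpow_add_inv_zpow_and_trace_eq hp hp2 hirr hζ ((i : ℤ) + j + 1)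
  have htail (j : ℕ) : ((tailSum e n j : k⟮ζ + ζ⁻¹⟯) : F) =
      tailSum (fun k => ζ ^ k + ζ⁻¹ ^ k) n j := by
    rw [tailSum, tailSum, AddSubmonoidClass.coe_finsetSum]
    exact Finset.sum_congr rfl fun k hk => he k (by have := (Finset.mem_Ioc.1 hk).1; omega)
  have hα : ((2 - e 1 : k⟮ζ + ζ⁻¹⟯) : F) = 2 - (ζ + ζ⁻¹) := by
    rw [AddSubgroupClass.coe_sub, he 1 le_rfl, pow_one, pow_one]
    rfl
  have hxy : (2 - e 1) * tailSum e n i * tailSum e n j = x - y := by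
    apply Subtype.ext
    rw [AddSubgroupClass.coe_sub, MulMemClass.coe_mul, MulMemClass.coe_mul, hα, htail, htail,
      hx, hy]
    exact two_sub_mul_tailSum_mul_tailSum (hn ▸ hζ.pow_eq_one) i.2.le j.2.le
  have hx_dvd : (p : ℤ) ∣ i - j ↔ i = j := by
    refine ⟨fun h => ?_, by rintro rfl; simp⟩
    have := Int.eq_zero_of_abs_lt_dvd h (by grind)
    omega
  have hy_dvd : ¬ (p : ℤ) ∣ i + j + 1 := fun h => by
    have := Int.le_of_dvd (by omega) h
    omega
  rw [twistedTraceForm_apply, hxy, map_sub, hx_trace, hy_trace, if_neg hy_dvd, zero_sub,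
    sub_neg_eq_add, sub_add_cancel]
  simp only [hx_dvd]

theorem rotated_Dn_odd_prime_general (hp : p.Prime) (hn : p = 2 * n + 1)
    (hirr : Irreducible (cyclotomic p k)) (hζ : IsPrimitiveRoot ζ p) (e : ℕ → k⟮ζ + ζ⁻¹⟯)
    (he : ∀ j : ℕ, 1 ≤ j → (e j : F) = ζ ^ j + ζ⁻¹ ^ j)
    (α : k⟮ζ + ζ⁻¹⟯) (hα : α = 2 - e 1)
    (w : Fin n → k⟮ζ + ζ⁻¹⟯)
    (hw0 : ∀ h0 : 0 < n, w ⟨0, h0⟩ = -e 1 - ∑ j ∈ Finset.Icc 2 n, 2 * e j)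
    (hwk : ∀ k : Fin n, 1 ≤ (k : ℕ) → w k = e (k : ℕ)) (i j : Fin n) :
    Algebra.trace k k⟮ζ + ζ⁻¹⟯ (α * w i * w j) =
      (p : k) * (((DnBasisMatrix n * (DnBasisMatrix n)ᵀ) i j : ℤ) : k) := by
  have hw := eq_sum_DnBasisMatrix_smul_tailSum hw0 hwk
  rw [← twistedTraceForm_apply, hw, hw, hα]
  exact bilinForm_sum_smul_sum_smul_of_orthogonal _
    (twistedTraceForm_tailSum_tailSum hp hn hirr hζ he) _ i j

end RotatedLattice

/-- With `K = ℚ(ζ + ζ⁻¹)` for `ζ` a primitive `p`-th root of unity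
(`p ≥ 7` prime), `n = (p-1)/2`, `α = 2 - e₁`, `w₁ = -e₁ - 2e₂ - ⋯ - 2eₙ` and
`wₖ = e_{k-1}` for `2 ≤ k ≤ n` (`0`-indexed below), one has
`Tr(α wᵢ wⱼ)/p = (B Bᵀ)_{ij}`: the lattice `(1/√p)·σ_α(I)` is a full-diversity
rotated copy of `Dₙ`. -/
theorem rotated_Dn_odd_prime
    (p n : ℕ) (hp : p.Prime) (hp7 : 7 ≤ p) (hn : p = 2 * n + 1)
    (ζ : ℂ) (hζ : IsPrimitiveRoot ζ p)
    (e : ℕ → ℚ⟮ζ + ζ⁻¹⟯)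
    (he : ∀ j : ℕ, 1 ≤ j → ((e j : ℂ) = ζ ^ j + ζ⁻¹ ^ j))
    (α : ℚ⟮ζ + ζ⁻¹⟯) (hα : α = 2 - e 1)
    (w : Fin n → ℚ⟮ζ + ζ⁻¹⟯)
    (hw0 : ∀ h0 : 0 < n, w ⟨0, h0⟩ = -e 1 - ∑ j ∈ Finset.Icc 2 n, 2 * e j)
    (hwk : ∀ k : Fin n, 1 ≤ (k : ℕ) → w k = e (k : ℕ)) :
    ∀ i j : Fin n,
      Algebra.trace ℚ ℚ⟮ζ + ζ⁻¹⟯ (α * w i * w j) =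
        (p : ℚ) * (((DnBasisMatrix n * (DnBasisMatrix n)ᵀ) i j : ℤ) : ℚ) := by
  exact rotated_Dn_odd_prime_general hp hn (Polynomial.cyclotomic.irreducible_rat hp.pos) hζ e he
    α hα w hw0 hwk
end
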